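/- arXiv:2001.09836 — 2 statements merged into one kernel-verified Lean document; each statement's English description precedes it below -/
import Mathlib

section
/- Let γ_n denote the growth rate of the star graph S_n for n ≥ 3. Then γ_n · log(log n)/log n → 1 as n → ∞; in particular γ_n → ∞ as n → ∞. (Proposition 2: γ(S_n) ∼ log(n)/log(log(n)).) -/
open MeasureTheory Filter Topology
open scoped ENNReal Classical

/-- The ballistic deposition height process on a graph `G`, started from `h0`,
driven by the sequence of chosen vertices `X`. -/
noncomputable def heightProcess {V : Type*} [Fintype V] (G : SimpleGraph V)
    (h0 : V → ℕ) (X : ℕ → V) : ℕ → V → ℕ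
  | 0 => h0
  | n + 1 => fun x =>
      if x = X n then
        1 + Finset.univ.sup (fun y =>
          if y = x ∨ G.Adj x y then heightProcess G h0 X n y else 0)
      else heightProcess G h0 X n x

/-- `X` is an i.i.d. sequence of uniformly distributed `V`-valued random variables on `(Ω, μ)`:
every finite cylinder event has the product-of-uniform probabilities. -/
def IsUniformIID {V : Type*} [Fintype V] {Ω : Type*} [MeasurableSpace Ω]
    (μ : Measure Ω) (X : ℕ → Ω → V) : Prop :=
  (∀ (n : ℕ) (v : V), MeasurableSet {ω | X n ω = v}) ∧
  (∀ (n : ℕ) (f : ℕ → V), μ {ω | ∀ k < n, X k ω = f k} = (Fintype.card V : ℝ≥0∞)⁻¹ ^ n)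

/-- `γ` is the growth rate of `G`: `γ > 0` and, for any i.i.d. uniform driving sequence,
almost surely `(#V/n) · max_x H_{x,n} → γ` and `(#V/n) · min_x H_{x,n} → γ`. -/
def IsGrowthRate {V : Type*} [Fintype V] (G : SimpleGraph V) (γ : ℝ) : Prop :=
  0 < γ ∧
  ∀ {Ω : Type} [MeasurableSpace Ω] (μ : Measure Ω) [IsProbabilityMeasure μ]
    (X : ℕ → Ω → V), IsUniformIID μ X →
    (∀ᵐ ω ∂μ, Tendsto (fun n : ℕ =>
        (Fintype.card V : ℝ) *
          (⨆ x : V, (heightProcess G (fun _ => 0) (fun k => X k ω) n x : ℝ)) / n)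
      atTop (𝓝 γ)) ∧
    (∀ᵐ ω ∂μ, Tendsto (fun n : ℕ =>
        (Fintype.card V : ℝ) *
          (⨅ x : V, (heightProcess G (fun _ => 0) (fun k => X k ω) n x : ℝ)) / n)
      atTop (𝓝 γ))


/-- The star graph `S n` on `n` vertices `0, 1, …, n−1`, with edges `{0, i}` for `1 ≤ i ≤ n−1`. -/
def starGraph (n : ℕ) : SimpleGraph (Fin n) :=
  SimpleGraph.fromRel fun i _ => (i : ℕ) = 0

/-!
Integrating the almost sure limits reduces the growth rate to the linear growth of the expected
maximal height, that is, of the iterates of the transition operator `transition G`.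

Upper bound: for `l > 1` a leaf `x` only sees the centre `o`, so a deposition there adds at most
`(l - 1) * l ^ max (H x) (H o)` to the weight `∑ x, l ^ max (H x) (H o)`, while a deposition at the
centre multiplies it by at most `n * l`. Hence the logarithm of the weight, which dominates
`log l` times the maximal height, has drift at most `(log n + log l + l - 1) / n`, and
`l = log n / log (log n)` gives the right asymptotics.

Lower bound: let the centre be at height `h` and wait for `w ≈ ε n` depositions. Every deposition at
a vertex adds at least one layer above `h`, so the vertices behave like bins receiving balls; the
occupation numbers are negatively correlated, and with high probability some bin receives
`k ≈ (1 - ε) log n / log (log n)` balls. Within `n` further steps on average the centre is chosen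
and inherits the maximal height, and the argument restarts. The gain is `k` per `(1 + ε) n` steps.
-/

open ProbabilityTheory
open scoped BigOperators

/-- The maximal height of a configuration, real-valued to match `IsGrowthRate`. -/
noncomputable def maxHeight {V : Type*} (H : V → ℕ) : ℝ := ⨆ x, (H x : ℝ)

theorem le_maxHeight {V : Type*} [Finite V] (H : V → ℕ) (x : V) : (H x : ℝ) ≤ maxHeight H :=
  le_ciSup (f := fun x => (H x : ℝ)) (Set.finite_range _).bddAbove x

section Deposition

variable {V : Type*} [Fintype V] (G : SimpleGraph V)

/-- The heights after one deposition at the vertex `x`. The argument order makes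
`heightProcess` a left fold of `deposit G` along the driving sequence. -/
noncomputable def deposit (H : V → ℕ) (x : V) : V → ℕ :=
  Function.update H x (1 + Finset.univ.sup fun y => if y = x ∨ G.Adj x y then H y else 0)

variable {G} {H : V → ℕ} {x y : V}

theorem deposit_of_ne (h : y ≠ x) : deposit G H x y = H y :=
  Function.update_of_ne h _ _

theorem lt_deposit_self (h : y = x ∨ G.Adj x y) : H y < deposit G H x x := by
  have hle := Finset.le_sup (f := fun z => if z = x ∨ G.Adj x z then H z else 0)
    (Finset.mem_univ y)
  simp only [h, if_true] at hle
  simp only [deposit, Function.update_self]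
  omega

theorem deposit_self_le {M : ℕ} (h : ∀ y, y = x ∨ G.Adj x y → H y ≤ M) :
    deposit G H x x ≤ M + 1 := by
  have hle : (Finset.univ.sup fun y => if y = x ∨ G.Adj x y then H y else 0) ≤ M := by
    refine Finset.sup_le fun y _ => ?_
    split_ifs with hy
    exacts [h y hy, M.zero_le]
  simp only [deposit, Function.update_self]
  omega

theorem le_deposit (H : V → ℕ) (x : V) : H ≤ deposit G H x :=
  fun y => (eq_or_ne y x).elim (fun h => h ▸ (lt_deposit_self (.inl rfl)).le)
    fun h => (deposit_of_ne h).ge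

theorem maxHeight_le_maxHeight_deposit (H : V → ℕ) (x : V) :
    maxHeight H ≤ maxHeight (deposit G H x) :=
  ciSup_mono (Set.finite_range _).bddAbove fun y => Nat.cast_le.2 (le_deposit H x y)

theorem deposit_le {M : ℕ} (h : ∀ y, H y ≤ M) (x y : V) : deposit G H x y ≤ M + 1 := by
  rcases eq_or_ne y x with rfl | hyx
  · exact deposit_self_le fun z _ => h z
  · exact (deposit_of_ne hyx).trans_le ((h y).trans M.le_succ)

theorem heightProcess_succ (h₀ : V → ℕ) (X : ℕ → V) (m : ℕ) :
    heightProcess G h₀ X (m + 1) = deposit G (heightProcess G h₀ X m) (X m) := by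
  ext x
  simp only [heightProcess, deposit, Function.update_apply]
  split_ifs with h
  · rw [h]
  · rfl

theorem heightProcess_eq_foldl (h₀ : V → ℕ) (X : ℕ → V) (m : ℕ) :
    heightProcess G h₀ X m = (List.ofFn fun k : Fin m => X k).foldl (deposit G) h₀ := by
  induction m with
  | zero => rfl
  | succ m ih =>
    rw [heightProcess_succ, ih, List.ofFn_succ_last, List.foldl_concat]
    rfl

theorem heightProcess_zero_le (X : ℕ → V) (m : ℕ) (x : V) :
    heightProcess G (fun _ => 0) X m x ≤ m := by
  induction m generalizing x with
  | zero => exact le_rfl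
  | succ m ih =>
    rw [heightProcess_succ]
    exact deposit_le ih _ x

end Deposition

section Transition

variable {V : Type*} [Fintype V] (G : SimpleGraph V)

/-- The transition operator of the height process: `transition G Q H` is the expectation of the
observable `Q` after one uniformly random deposition on `H`. -/
noncomputable def transition (Q : (V → ℕ) → ℝ) (H : V → ℕ) : ℝ :=
  𝔼 x, Q (deposit G H x)

theorem transition_monotone : Monotone (transition G) :=
  fun _ _ h _ => Finset.expect_le_expect fun _ _ => h _

theorem iterate_transition_succ (Q : (V → ℕ) → ℝ) (m : ℕ) (H : V → ℕ) :
    (transition G)^[m + 1] Q H = 𝔼 x, (transition G)^[m] Q (deposit G H x) :=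
  congrFun (Function.iterate_succ_apply' _ _ _) H

theorem iterate_transition_add_const [Nonempty V] (Q : (V → ℕ) → ℝ) (c : ℝ) (m : ℕ) (H : V → ℕ) :
    (transition G)^[m] (fun H => Q H + c) H = (transition G)^[m] Q H + c := by
  induction m generalizing H with
  | zero => rfl
  | succ m ih =>
    simp only [iterate_transition_succ, ih, Finset.expect_add_distrib, Fintype.expect_const]

theorem expect_foldl_deposit (Q : (V → ℕ) → ℝ) (m : ℕ) (H : V → ℕ) :
    𝔼 f : Fin m → V, Q ((List.ofFn f).foldl (deposit G) H) = (transition G)^[m] Q H := by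
  induction m generalizing H with
  | zero => simp
  | succ m ih =>
    rw [iterate_transition_succ, ← Fintype.expect_equiv (Fin.consEquiv fun _ => V)
      (fun p => Q ((List.ofFn p.2).foldl (deposit G) (deposit G H p.1))) _
      (fun p => by simp [Fin.consEquiv])]
    rw [← Finset.univ_product_univ, Finset.expect_product]
    exact Finset.expect_congr rfl fun x _ => ih (deposit G H x)

end Transition

section UniformIID

variable {V Ω : Type*} [Fintype V] [MeasurableSpace Ω] {μ : Measure Ω} {X : ℕ → Ω → V}

theorem IsUniformIID.measurable_tuple [MeasurableSpace V] (hX : IsUniformIID μ X) (m : ℕ) :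
    Measurable fun ω (k : Fin m) => X k ω :=
  measurable_pi_iff.2 fun k => measurable_to_countable' (hX.1 k)

theorem IsUniformIID.measurable_comp_tuple (hX : IsUniformIID μ X) {m : ℕ}
    (F : (Fin m → V) → ℝ) : Measurable fun ω => F fun k => X k ω :=
  let : MeasurableSpace V := ⊤
  (measurable_of_finite F).comp (hX.measurable_tuple m)

theorem IsUniformIID.measureReal_tuple_eq [Nonempty V] (hX : IsUniformIID μ X) {m : ℕ}
    (f : Fin m → V) : μ.real {ω | (fun k : Fin m => X k ω) = f} = (Fintype.card V : ℝ)⁻¹ ^ m := by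
  obtain ⟨g, rfl⟩ := (Fin.val_injective (n := m)).surjective_comp_right (γ := V) f
  have hg : {ω | (fun k : Fin m => X k ω) = g ∘ Fin.val} = {ω | ∀ k < m, X k ω = g k} := by
    ext ω
    simp [funext_iff, Fin.forall_iff]
  simp [Measure.real, hg, hX.2 m g]

theorem IsUniformIID.integral_comp_tuple [Nonempty V] [IsFiniteMeasure μ]
    (hX : IsUniformIID μ X) {m : ℕ} (F : (Fin m → V) → ℝ) :
    ∫ ω, F (fun k => X k ω) ∂μ = 𝔼 f, F f := by
  let : MeasurableSpace V := ⊤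
  have hm := hX.measurable_tuple m
  rw [← integral_map hm.aemeasurable (measurable_of_finite F).aestronglyMeasurable,
    integral_fintype Integrable.of_finite, Fintype.expect_eq_sum_div_card, Finset.sum_div]
  refine Finset.sum_congr rfl fun f _ => ?_
  rw [map_measureReal_apply hm (measurableSet_singleton f), Set.preimage]
  simp only [Set.mem_singleton_iff, hX.measureReal_tuple_eq]
  simp [div_eq_inv_mul]

theorem IsUniformIID.integral_heightProcess [Nonempty V] [IsFiniteMeasure μ]
    (hX : IsUniformIID μ X) (G : SimpleGraph V) (h₀ : V → ℕ) (m : ℕ) (Q : (V → ℕ) → ℝ) :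
    ∫ ω, Q (heightProcess G h₀ (fun k => X k ω) m) ∂μ = (transition G)^[m] Q h₀ := by
  simp only [heightProcess_eq_foldl, ← expect_foldl_deposit]
  exact hX.integral_comp_tuple fun f => Q ((List.ofFn f).foldl (deposit G) h₀)

theorem IsUniformIID.measurable_heightProcess (hX : IsUniformIID μ X) (G : SimpleGraph V)
    (h₀ : V → ℕ) (m : ℕ) (Q : (V → ℕ) → ℝ) :
    Measurable fun ω => Q (heightProcess G h₀ (fun k => X k ω) m) := by
  simp only [heightProcess_eq_foldl]
  exact hX.measurable_comp_tuple fun f => Q ((List.ofFn f).foldl (deposit G) h₀)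

theorem isUniformIID_infinitePi_uniformOn (V : Type*) [Fintype V] [Nonempty V]
    [MeasurableSpace V] [MeasurableSingletonClass V] :
    IsUniformIID (Measure.infinitePi fun _ : ℕ => uniformOn (Set.univ : Set V))
      fun k ω => ω k := by
  have hmeas (k : ℕ) : Measurable fun ω : ℕ → V => ω k := measurable_pi_apply k
  refine ⟨fun k v => hmeas k (measurableSet_singleton v), fun m f => ?_⟩
  have hcyl : {ω : ℕ → V | ∀ k < m, ω k = f k} = Set.pi (Finset.range m) fun k => {f k} := by
    ext ω
    simp
  rw [hcyl, Measure.infinitePi_pi _ fun _ _ => measurableSet_singleton _]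
  simp [uniformOn_univ]

end UniformIID

section GrowthRate

variable {V : Type} [Fintype V] [Nonempty V] {G : SimpleGraph V} {γ a b : ℝ}

theorem IsGrowthRate.tendsto_iterate_transition (h : IsGrowthRate G γ) :
    Tendsto (fun m : ℕ => (Fintype.card V : ℝ) * (transition G)^[m] maxHeight 0 / m)
      atTop (𝓝 γ) := by
  let : MeasurableSpace V := ⊤
  have hX := isUniformIID_infinitePi_uniformOn V
  set μ := Measure.infinitePi fun _ : ℕ => uniformOn (Set.univ : Set V)
  have hlim := tendsto_integral_of_dominated_convergence (μ := μ)
    (F := fun m ω => (Fintype.card V : ℝ) * maxHeight (heightProcess G (fun _ => 0) ω m) / m)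
    (f := fun _ => γ) (fun _ => (Fintype.card V : ℝ))
    (fun m => (((hX.measurable_heightProcess G _ m maxHeight).const_mul _).div_const
      _).aestronglyMeasurable)
    (integrable_const _) (fun m => .of_forall fun ω => ?_) (h.2 μ _ hX).1
  · simp only [integral_const, probReal_univ, one_smul] at hlim
    refine hlim.congr fun m => ?_
    rw [integral_div, integral_const_mul, hX.integral_heightProcess]
    rfl
  · have hle : maxHeight (heightProcess G (fun _ => 0) ω m) ≤ m :=
      ciSup_le fun x => by exact_mod_cast heightProcess_zero_le ω m x
    have hnonneg : 0 ≤ maxHeight (heightProcess G (fun _ => 0) ω m) :=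
      Real.iSup_nonneg fun x => Nat.cast_nonneg _
    rw [Real.norm_of_nonneg (by positivity), mul_div_assoc]
    exact mul_le_of_le_one_right (Nat.cast_nonneg _) (div_le_one_of_le₀ hle (Nat.cast_nonneg _))

theorem tendsto_mul_affine_div (n a b : ℝ) :
    Tendsto (fun m : ℕ => n * (a * m + b) / m) atTop (𝓝 (n * a)) := by
  have hlim := (tendsto_const_div_atTop_nhds_zero_nat (n * b)).const_add (n * a)
  rw [add_zero] at hlim
  refine hlim.congr' ?_
  filter_upwards [eventually_ne_atTop 0] with m hm
  field_simp

theorem IsGrowthRate.le_of_iterate_transition_le (h : IsGrowthRate G γ)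
    (hb : ∀ m : ℕ, (transition G)^[m] maxHeight 0 ≤ a * m + b) : γ ≤ Fintype.card V * a :=
  le_of_tendsto_of_tendsto' h.tendsto_iterate_transition (tendsto_mul_affine_div _ a b)
    fun m => by gcongr; exact hb m

theorem IsGrowthRate.le_of_le_iterate_transition (h : IsGrowthRate G γ)
    (hb : ∀ m : ℕ, a * m + b ≤ (transition G)^[m] maxHeight 0) : Fintype.card V * a ≤ γ :=
  le_of_tendsto_of_tendsto' (tendsto_mul_affine_div _ a b) h.tendsto_iterate_transition
    fun m => by gcongr; exact hb m

theorem IsGrowthRate.le_of_transition_le (h : IsGrowthRate G γ) {Φ : (V → ℕ) → ℝ}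
    (hΦ : maxHeight ≤ Φ) (hdrift : ∀ H, transition G Φ H ≤ Φ H + a) :
    γ ≤ Fintype.card V * a := by
  refine h.le_of_iterate_transition_le (b := Φ 0) fun m => ?_
  have hiter : (transition G)^[m] maxHeight ≤ fun H => Φ H + a * m := by
    refine (transition_monotone G).seq_le_seq m
      (x := fun m => (transition G)^[m] maxHeight) (y := fun m H => Φ H + a * m)
      (fun H => ?_) (fun k _ => (Function.iterate_succ_apply' _ _ _).le) fun k _ H => ?_
    · simpa using hΦ H
    · have hconst := iterate_transition_add_const G Φ (a * k) 1 H
      rw [Function.iterate_one] at hconst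
      rw [hconst]
      push_cast
      linarith [hdrift H]
  linarith [hiter 0]

end GrowthRate

section ExpWeight

variable {V : Type*} [Fintype V] {G : SimpleGraph V} {o : V} {l : ℝ}

/-- The exponential weight of a configuration, a Lyapunov function for graphs with centre `o`.
Heights are truncated from below at the height of `o`, so that a deposition at a vertex whose only
neighbour is `o` multiplies a single summand by at most `l`. -/
noncomputable def expWeight (o : V) (l : ℝ) (H : V → ℕ) : ℝ := ∑ x, l ^ max (H x) (H o)

theorem pow_max_le_expWeight (hl : 0 ≤ l) (H : V → ℕ) (x : V) :
    l ^ max (H x) (H o) ≤ expWeight o l H :=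
  Finset.single_le_sum (f := fun x => l ^ max (H x) (H o)) (fun _ _ => pow_nonneg hl _)
    (Finset.mem_univ x)

theorem pow_le_expWeight (hl : 1 ≤ l) (H : V → ℕ) (x : V) : l ^ H x ≤ expWeight o l H :=
  (pow_right_mono₀ hl (le_max_left _ _)).trans
    (pow_max_le_expWeight (zero_le_one.trans hl) H x)

theorem expWeight_pos (hl : 0 < l) (H : V → ℕ) : 0 < expWeight o l H :=
  Finset.sum_pos (fun _ _ => pow_pos hl _) ⟨o, Finset.mem_univ o⟩

theorem expWeight_deposit_le (hl : 1 ≤ l) (H : V → ℕ) (x : V) :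
    expWeight o l (deposit G H x) ≤ Fintype.card V * (l * expWeight o l H) := by
  have : Nonempty V := ⟨o⟩
  obtain ⟨z, hz⟩ := Finite.exists_max H
  refine (Finset.sum_le_card_nsmul _ _ _ fun y _ => ?_).trans_eq (nsmul_eq_mul _ _)
  calc l ^ max (deposit G H x y) (deposit G H x o)
      ≤ l ^ (H z + 1) := pow_right_mono₀ hl (max_le (deposit_le hz x y) (deposit_le hz x o))
    _ = l * l ^ H z := pow_succ' _ _
    _ ≤ l * expWeight o l H := by gcongr; exact pow_le_expWeight hl H z

theorem expWeight_deposit_le_add (ho : G.IsVertexCover {o}) (hl : 1 ≤ l) (H : V → ℕ) {x : V}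
    (hx : x ≠ o) :
    expWeight o l (deposit G H x) ≤ expWeight o l H + (l - 1) * l ^ max (H x) (H o) := by
  have hself : deposit G H x x ≤ max (H x) (H o) + 1 := deposit_self_le fun y hy => by
    rcases hy with rfl | hxy
    · exact le_max_left _ _
    · obtain rfl : y = o := (ho hxy).resolve_left hx
      exact le_max_right _ _
  have hpow : l ^ max (deposit G H x x) (H o) ≤ l * l ^ max (H x) (H o) := by
    rw [← pow_succ']
    exact pow_right_mono₀ hl (max_le hself ((le_max_right _ _).trans (Nat.le_succ _)))
  simp only [expWeight, deposit_of_ne hx.symm]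
  rw [← Finset.add_sum_erase _ _ (Finset.mem_univ x),
    ← Finset.add_sum_erase _ (fun y => l ^ max (H y) (H o)) (Finset.mem_univ x),
    Finset.sum_congr rfl fun y hy => by rw [deposit_of_ne (Finset.ne_of_mem_erase hy)]]
  linarith

theorem log_expWeight_deposit_le (ho : G.IsVertexCover {o}) (hl : 1 < l) (H : V → ℕ) (x : V) :
    Real.log (expWeight o l (deposit G H x)) ≤ Real.log (expWeight o l H) +
      ((if x = o then Real.log (Fintype.card V) + Real.log l else 0) +
        (l - 1) * (l ^ max (H x) (H o) / expWeight o l H)) := by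
  have : Nonempty V := ⟨o⟩
  have hS : 0 < expWeight o l H := expWeight_pos (by linarith) H
  have hS' : 0 < expWeight o l (deposit G H x) := expWeight_pos (by linarith) _
  have hq : 0 ≤ (l - 1) * (l ^ max (H x) (H o) / expWeight o l H) :=
    mul_nonneg (by linarith) (by positivity)
  split_ifs with hx
  · have hle := Real.log_le_log hS' (expWeight_deposit_le hl.le H x)
    rw [Real.log_mul (by positivity) (by positivity), Real.log_mul (by positivity) hS.ne'] at hle
    linarith
  · have hle := expWeight_deposit_le_add ho hl.le H hx
    have hlog := Real.log_le_sub_one_of_pos (div_pos hS' hS)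
    rw [Real.log_div hS'.ne' hS.ne'] at hlog
    have hdiv := div_le_div_of_nonneg_right hle hS.le
    rw [add_div, div_self hS.ne', mul_div_assoc] at hdiv
    linarith

theorem transition_log_expWeight_le (ho : G.IsVertexCover {o}) (hl : 1 < l) (H : V → ℕ) :
    transition G (fun H => Real.log (expWeight o l H)) H ≤ Real.log (expWeight o l H) +
      (Real.log (Fintype.card V) + Real.log l + (l - 1)) / Fintype.card V := by
  have : Nonempty V := ⟨o⟩
  have hS : expWeight o l H ≠ 0 := (expWeight_pos (by linarith) H).ne'
  refine (Finset.expect_le_expect fun x _ => log_expWeight_deposit_le ho hl H x).trans_eq ?_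
  rw [Finset.expect_add_distrib, Fintype.expect_const, Fintype.expect_eq_sum_div_card,
    Finset.sum_add_distrib, Finset.sum_ite_eq' Finset.univ o, if_pos (Finset.mem_univ o),
    ← Finset.mul_sum, ← Finset.sum_div, ← expWeight, div_self hS, mul_one]

end ExpWeight

theorem IsGrowthRate.le_of_isVertexCover_singleton {V : Type} [Fintype V] {G : SimpleGraph V}
    {γ l : ℝ} {o : V} (h : IsGrowthRate G γ) (ho : G.IsVertexCover {o}) (hl : 1 < l) :
    γ ≤ (Real.log (Fintype.card V) + Real.log l + (l - 1)) / Real.log l := by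
  have : Nonempty V := ⟨o⟩
  have hlog : 0 < Real.log l := Real.log_pos hl
  have hdom : maxHeight ≤ fun H => Real.log (expWeight o l H) / Real.log l := fun H =>
    ciSup_le fun x => by
      rw [le_div_iff₀ hlog, ← Real.log_pow]
      exact Real.log_le_log (by positivity) (pow_le_expWeight hl.le H x)
  refine (h.le_of_transition_le hdom fun H => ?_).trans_eq
    (mul_div_cancel₀ _ (Nat.cast_ne_zero.2 Fintype.card_ne_zero))
  rw [transition, ← Finset.expect_div, div_right_comm _ (Real.log l), ← add_div]
  exact div_le_div_of_nonneg_right (transition_log_expWeight_le ho hl H) hlog.le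

section ProductInequality

variable {ι : Type*}

theorem prod_sub_sum_mul_prod_erase_le (s : Finset ι) {a d : ι → ℝ} (hd : ∀ i, 0 ≤ d i)
    (hda : ∀ i, d i ≤ a i) :
    ∏ i ∈ s, a i - ∑ i ∈ s, d i * ∏ j ∈ s.erase i, a j ≤ ∏ i ∈ s, (a i - d i) := by
  have ha (i : ι) : 0 ≤ a i := (hd i).trans (hda i)
  induction s using Finset.induction_on with
  | empty => simp
  | insert z s hz ih =>
    have hprod : ∏ i ∈ s, (a i - d i) ≤ ∏ i ∈ s, a i :=
      Finset.prod_le_prod (fun i _ => sub_nonneg.2 (hda i)) fun i _ => sub_le_self _ (hd i)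
    have hsum : ∑ i ∈ s, d i * ∏ j ∈ (insert z s).erase i, a j =
        a z * ∑ i ∈ s, d i * ∏ j ∈ s.erase i, a j := by
      rw [Finset.mul_sum]
      refine Finset.sum_congr rfl fun i hi => ?_
      rw [Finset.erase_insert_of_ne (ne_of_mem_of_not_mem hi hz).symm,
        Finset.prod_insert fun h => hz (Finset.mem_of_mem_erase h), mul_left_comm]
    rw [Finset.prod_insert hz, Finset.prod_insert hz, Finset.sum_insert hz, hsum,
      Finset.erase_insert hz]
    linarith [mul_le_mul_of_nonneg_left ih (ha z), mul_le_mul_of_nonneg_left hprod (hd z)]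

theorem expect_prod_update_le [Fintype ι] [Nonempty ι] {a b : ι → ℝ} (hb : ∀ i, 0 ≤ b i)
    (hba : ∀ i, b i ≤ a i) :
    𝔼 i, ∏ j, Function.update a i (b i) j ≤
      ∏ i, ((1 - (Fintype.card ι : ℝ)⁻¹) * a i + (Fintype.card ι : ℝ)⁻¹ * b i) := by
  set t := (Fintype.card ι : ℝ)⁻¹
  have ht0 : 0 ≤ t := by positivity
  have ht1 : t ≤ 1 := Nat.cast_inv_le_one _
  have hprod := prod_sub_sum_mul_prod_erase_le Finset.univ (a := a) (d := fun i => t * (a i - b i))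
    (fun i => mul_nonneg ht0 (sub_nonneg.2 (hba i)))
    fun i => (mul_le_of_le_one_left (sub_nonneg.2 (hba i)) ht1).trans (sub_le_self _ (hb i))
  have hupdate (i : ι) : ∏ j, Function.update a i (b i) j =
      ∏ j, a j - (a i - b i) * ∏ j ∈ Finset.univ.erase i, a j := by
    rw [Finset.prod_update_of_mem (Finset.mem_univ i), ← Finset.erase_eq,
      ← Finset.mul_prod_erase _ _ (Finset.mem_univ i)]
    ring
  simp only [hupdate, Finset.expect_sub_distrib, Fintype.expect_const]
  convert hprod using 2
  · rw [Fintype.expect_eq_sum_div_card, div_eq_inv_mul, Finset.mul_sum]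
    exact Finset.sum_congr rfl fun i _ => (mul_assoc _ _ _).symm
  · ring

end ProductInequality

section BinomialLowerTail

/-- The lower tail `P(Bin(m, t) < i)` of the binomial distribution, by conditioning on the first
trial. The truncation in `i - 1` is harmless because the tail vanishes at `i = 0`. -/
noncomputable def binomialLowerTail (t : ℝ) : ℕ → ℕ → ℝ
  | 0, i => if i = 0 then 0 else 1
  | m + 1, i => (1 - t) * binomialLowerTail t m i + t * binomialLowerTail t m (i - 1)

variable {t : ℝ}

theorem binomialLowerTail_zero_right (t : ℝ) (m : ℕ) : binomialLowerTail t m 0 = 0 := by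
  induction m with
  | zero => simp [binomialLowerTail]
  | succ m ih => simp [binomialLowerTail, ih]

theorem binomialLowerTail_nonneg (ht0 : 0 ≤ t) (ht1 : t ≤ 1) (m i : ℕ) :
    0 ≤ binomialLowerTail t m i := by
  induction m generalizing i with
  | zero => rw [binomialLowerTail]; positivity
  | succ m ih =>
    exact add_nonneg (mul_nonneg (sub_nonneg.2 ht1) (ih _)) (mul_nonneg ht0 (ih _))

theorem binomialLowerTail_mono (ht0 : 0 ≤ t) (ht1 : t ≤ 1) (m : ℕ) :
    Monotone (binomialLowerTail t m) := by
  induction m with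
  | zero =>
    intro i j hij
    simp only [binomialLowerTail]
    split_ifs <;> first | omega | norm_num
  | succ m ih =>
    exact fun i j hij => add_le_add (mul_le_mul_of_nonneg_left (ih hij) (sub_nonneg.2 ht1))
      (mul_le_mul_of_nonneg_left (ih (Nat.sub_le_sub_right hij 1)) ht0)

theorem binomialLowerTail_le (ht0 : 0 ≤ t) (ht1 : t ≤ 1) (m i : ℕ) :
    binomialLowerTail t m i ≤ 1 - m.choose i * t ^ i * (1 - t) ^ m := by
  have hs : 0 ≤ 1 - t := sub_nonneg.2 ht1
  induction m generalizing i with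
  | zero => cases i <;> simp [binomialLowerTail]
  | succ m ih =>
    cases i with
    | zero =>
      simpa [binomialLowerTail_zero_right] using pow_le_one₀ hs (sub_le_self 1 ht0)
    | succ i =>
      have hpow : (m.choose i : ℝ) * t ^ (i + 1) * (1 - t) ^ (m + 1) ≤
          m.choose i * t ^ (i + 1) * (1 - t) ^ m :=
        mul_le_mul_of_nonneg_left (pow_le_pow_of_le_one hs (sub_le_self 1 ht0) m.le_succ)
          (by positivity)
      calc binomialLowerTail t (m + 1) (i + 1)
          ≤ (1 - t) * (1 - m.choose (i + 1) * t ^ (i + 1) * (1 - t) ^ m) +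
              t * (1 - m.choose i * t ^ i * (1 - t) ^ m) :=
            add_le_add (mul_le_mul_of_nonneg_left (ih _) hs) (mul_le_mul_of_nonneg_left (ih _) ht0)
        _ = 1 - m.choose (i + 1) * t ^ (i + 1) * (1 - t) ^ (m + 1) -
              m.choose i * t ^ (i + 1) * (1 - t) ^ m := by ring
        _ ≤ 1 - m.choose (i + 1) * t ^ (i + 1) * (1 - t) ^ (m + 1) -
              m.choose i * t ^ (i + 1) * (1 - t) ^ (m + 1) := sub_le_sub_left hpow _
        _ = 1 - (m + 1).choose (i + 1) * t ^ (i + 1) * (1 - t) ^ (m + 1) := by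
            rw [Nat.choose_succ_succ]; push_cast; ring

end BinomialLowerTail

/-- The expected number of vertices, among `n`, that receive exactly `k` of `w` uniform
depositions, up to the exponent of `1 - n⁻¹`, which is `w` instead of `w - k`. -/
noncomputable def fullVerticesBound (n k w : ℕ) : ℝ :=
  n * (w.choose k * (n : ℝ)⁻¹ ^ k * (1 - (n : ℝ)⁻¹) ^ w)

theorem fullVerticesBound_nonneg (n k w : ℕ) : 0 ≤ fullVerticesBound n k w :=
  mul_nonneg n.cast_nonneg <| mul_nonneg (by positivity) <|
    pow_nonneg (sub_nonneg.2 (Nat.cast_inv_le_one n)) w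

section UniversalVertex

variable {V : Type*} [Fintype V] {G : SimpleGraph V} {o : V}

theorem maxHeight_le_iterate_transition [Nonempty V] (m : ℕ) :
    maxHeight ≤ (transition G)^[m] maxHeight := by
  have hstep : maxHeight ≤ transition G maxHeight := fun H =>
    Finset.le_expect Finset.univ_nonempty fun x _ => maxHeight_le_maxHeight_deposit H x
  exact (transition_monotone G).monotone_iterate_of_le_map hstep m.zero_le

theorem height_isUniversal_lt_deposit (ho : G.IsUniversal o) (H : V → ℕ) (x : V) :
    H o < deposit G H x x :=
  lt_deposit_self <| (eq_or_ne o x).imp_right fun h => (ho h).symm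

theorem height_lt_deposit_isUniversal (ho : G.IsUniversal o) (H : V → ℕ) (y : V) :
    H y < deposit G H o o :=
  lt_deposit_self <| (eq_or_ne y o).imp_right fun h => ho h.symm

/-- A bound for the probability that `m` depositions on `H` leave every vertex below `h + k`,
where `h` is at most the height of a universal vertex. A vertex `x` then misses `k - (H x - h)`
layers and every deposition at `x` adds at least one, even if `H x < h`; the product treats the
numbers of depositions at different vertices as independent. -/
noncomputable def missProb (h k m : ℕ) (H : V → ℕ) : ℝ :=
  ∏ x, binomialLowerTail (Fintype.card V : ℝ)⁻¹ m (k - (H x - h))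

theorem missProb_nonneg (h k m : ℕ) (H : V → ℕ) : 0 ≤ missProb h k m H :=
  Finset.prod_nonneg fun _ _ => binomialLowerTail_nonneg (by positivity) (Nat.cast_inv_le_one _) _ _

theorem expect_missProb_deposit_le [Nonempty V] (ho : G.IsUniversal o) {h : ℕ} (k m : ℕ)
    {H : V → ℕ} (hH : h ≤ H o) :
    𝔼 x, missProb h k m (deposit G H x) ≤ missProb h k (m + 1) H := by
  have ht0 : 0 ≤ (Fintype.card V : ℝ)⁻¹ := by positivity
  have ht1 : (Fintype.card V : ℝ)⁻¹ ≤ 1 := Nat.cast_inv_le_one _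
  have hmono := binomialLowerTail_mono ht0 ht1 m
  refine (Finset.expect_le_expect fun x _ => ?_).trans <| expect_prod_update_le
    (a := fun x => binomialLowerTail (Fintype.card V : ℝ)⁻¹ m (k - (H x - h)))
    (b := fun x => binomialLowerTail (Fintype.card V : ℝ)⁻¹ m (k - (H x - h) - 1))
    (fun x => binomialLowerTail_nonneg ht0 ht1 _ _) fun x => hmono (Nat.sub_le _ _)
  refine Finset.prod_le_prod (fun y _ => binomialLowerTail_nonneg ht0 ht1 _ _) fun y _ => ?_
  rcases eq_or_ne y x with rfl | hyx
  · rw [Function.update_self]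
    have hself : H y < deposit G H y y := lt_deposit_self (.inl rfl)
    have hcentre := height_isUniversal_lt_deposit ho H y
    exact hmono (by omega)
  · rw [Function.update_of_ne hyx, deposit_of_ne hyx]

theorem add_mul_one_sub_missProb_le [Nonempty V] (ho : G.IsUniversal o) {h : ℕ} (k m : ℕ)
    {H : V → ℕ} (hH : h ≤ H o) :
    h + k * (1 - missProb h k m H) ≤ (transition G)^[m] maxHeight H := by
  induction m generalizing H with
  | zero =>
    by_cases htop : ∃ x, h + k ≤ H x
    · obtain ⟨x, hx⟩ := htop
      have hmax : (h + k : ℝ) ≤ maxHeight H :=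
        le_trans (by exact_mod_cast hx) (le_maxHeight H x)
      have hk := mul_nonneg k.cast_nonneg (missProb_nonneg h k 0 H)
      rw [Function.iterate_zero_apply]
      linarith
    · push Not at htop
      have hmiss : missProb h k 0 H = 1 := Finset.prod_eq_one fun x _ => by
        have hx := htop x
        have hcentre := htop o
        exact if_neg (by omega)
      rw [hmiss, sub_self, mul_zero, add_zero]
      exact (Nat.cast_le.2 hH).trans (le_maxHeight H o)
  | succ m ih =>
    rw [iterate_transition_succ]
    calc (h : ℝ) + k * (1 - missProb h k (m + 1) H)
        ≤ h + k * (1 - 𝔼 x, missProb h k m (deposit G H x)) := by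
          gcongr; exact expect_missProb_deposit_le ho k m hH
      _ = 𝔼 x, (h + k * (1 - missProb h k m (deposit G H x))) := by
          simp only [Finset.expect_add_distrib, ← Finset.mul_expect, Finset.expect_sub_distrib,
            Fintype.expect_const]
      _ ≤ 𝔼 x, (transition G)^[m] maxHeight (deposit G H x) :=
          Finset.expect_le_expect fun x _ => ih (hH.trans (le_deposit H x o))

theorem add_mul_one_sub_exp_le_iterate_transition [Nonempty V] (ho : G.IsUniversal o) (k m : ℕ)
    (H : V → ℕ) :
    H o + k * (1 - Real.exp (-fullVerticesBound (Fintype.card V) k m)) ≤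
      (transition G)^[m] maxHeight H := by
  have ht0 : 0 ≤ (Fintype.card V : ℝ)⁻¹ := by positivity
  have ht1 : (Fintype.card V : ℝ)⁻¹ ≤ 1 := Nat.cast_inv_le_one _
  set q := m.choose k * (Fintype.card V : ℝ)⁻¹ ^ k * (1 - (Fintype.card V : ℝ)⁻¹) ^ m
  have htail (x : V) :
      binomialLowerTail (Fintype.card V : ℝ)⁻¹ m (k - (H x - H o)) ≤ Real.exp (-q) :=
    calc binomialLowerTail (Fintype.card V : ℝ)⁻¹ m (k - (H x - H o))
        ≤ binomialLowerTail (Fintype.card V : ℝ)⁻¹ m k :=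
          binomialLowerTail_mono ht0 ht1 m (Nat.sub_le _ _)
      _ ≤ 1 - q := binomialLowerTail_le ht0 ht1 m k
      _ ≤ Real.exp (-q) := Real.one_sub_le_exp_neg q
  have hmiss : missProb (H o) k m H ≤ Real.exp (-fullVerticesBound (Fintype.card V) k m) := by
    refine (Finset.prod_le_prod (fun x _ => binomialLowerTail_nonneg ht0 ht1 _ _)
      fun x _ => htail x).trans_eq ?_
    rw [Finset.prod_const, ← Real.exp_nat_mul, Finset.card_univ, mul_neg, fullVerticesBound]
  refine le_trans ?_ (add_mul_one_sub_missProb_le ho k m le_rfl)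
  gcongr

/-- The first deposition at `o`, for which one waits `Fintype.card V` steps on average, makes `o`
the highest vertex. -/
theorem maxHeight_add_le_iterate_transition (ho : G.IsUniversal o) {a b : ℝ} (ha : 0 ≤ a)
    (hb : 0 ≤ b) {m : ℕ}
    (hm : ∀ r < m, ∀ H, a * r - b + H o ≤ (transition G)^[r] maxHeight H) (H : V → ℕ) :
    maxHeight H + (a * m - b - a * Fintype.card V) ≤ (transition G)^[m] maxHeight H := by
  have : Nonempty V := ⟨o⟩
  induction m generalizing H with
  | zero =>
    have hcard : 0 ≤ a * Fintype.card V := by positivity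
    simp only [Nat.cast_zero, mul_zero, Function.iterate_zero, id]
    linarith
  | succ m ih =>
    have hstep (x : V) : maxHeight H + (a * m - b - a * Fintype.card V) +
        (if x = o then a * Fintype.card V else 0) ≤
          (transition G)^[m] maxHeight (deposit G H x) := by
      split_ifs with hx
      · have hcentre : maxHeight H ≤ deposit G H o o :=
          ciSup_le fun y => Nat.cast_le.2 (height_lt_deposit_isUniversal ho H y).le
        rw [hx]
        linarith [hm m m.lt_succ_self (deposit G H o)]
      · linarith [ih (fun r hr => hm r (hr.trans m.lt_succ_self)) (deposit G H x),
          maxHeight_le_maxHeight_deposit (G := G) H x]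
    rw [iterate_transition_succ]
    refine le_trans (le_of_eq ?_) (Finset.expect_le_expect fun x _ => hstep x)
    rw [Finset.expect_add_distrib, Fintype.expect_const, Fintype.expect_eq_sum_div_card,
      Finset.sum_ite_eq' Finset.univ o, if_pos (Finset.mem_univ o),
      mul_div_cancel_right₀ _ (Nat.cast_ne_zero.2 Fintype.card_ne_zero)]
    push_cast
    ring

theorem le_iterate_transition_of_le_window (ho : G.IsUniversal o) {a c : ℝ} {w : ℕ} (ha : 0 ≤ a)
    (hw : ∀ H, H o + c ≤ (transition G)^[w] maxHeight H) (hac : a * (Fintype.card V + w) ≤ c)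
    (m : ℕ) (H : V → ℕ) : a * m - a * w + H o ≤ (transition G)^[m] maxHeight H := by
  have : Nonempty V := ⟨o⟩
  induction m using Nat.strong_induction_on generalizing H with
  | _ m ih =>
    rcases lt_or_ge m w with hmw | hwm
    · have hpos : (H o : ℝ) ≤ (transition G)^[m] maxHeight H :=
        (le_maxHeight H o).trans (maxHeight_le_iterate_transition m H)
      have hle : a * m ≤ a * w := by gcongr
      linarith
    · obtain ⟨r, rfl⟩ := Nat.exists_eq_add_of_le hwm
      have hwait : (fun H => maxHeight H + (a * r - a * w - a * Fintype.card V)) ≤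
          (transition G)^[r] maxHeight := fun H =>
        maxHeight_add_le_iterate_transition ho ha (by positivity)
          (fun s hs => ih s (hs.trans_le (Nat.le_add_left r w))) H
      have hrenew := (transition_monotone G).iterate w hwait H
      rw [iterate_transition_add_const] at hrenew
      rw [Function.iterate_add_apply]
      push_cast
      linarith [hw H]

end UniversalVertex

theorem IsGrowthRate.le_of_isUniversal {V : Type} [Fintype V] {G : SimpleGraph V} {γ : ℝ} {o : V}
    (h : IsGrowthRate G γ) (ho : G.IsUniversal o) (k w : ℕ) :
    k * (1 - Real.exp (-fullVerticesBound (Fintype.card V) k w)) / (1 + w / Fintype.card V) ≤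
      γ := by
  have : Nonempty V := ⟨o⟩
  have hp : 0 ≤ 1 - Real.exp (-fullVerticesBound (Fintype.card V) k w) :=
    sub_nonneg.2 (Real.exp_le_one_iff.2 (neg_nonpos.2 (fullVerticesBound_nonneg _ k w)))
  set c := k * (1 - Real.exp (-fullVerticesBound (Fintype.card V) k w))
  set a := c / (Fintype.card V + w)
  have hac : a * (Fintype.card V + w) = c := div_mul_cancel₀ c (by positivity)
  have hrate : c / (1 + w / Fintype.card V) = Fintype.card V * a := by
    simp only [a]
    field_simp
  rw [hrate]
  refine h.le_of_le_iterate_transition (b := -(a * w)) fun m => ?_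
  have hiter := le_iterate_transition_of_le_window ho (by positivity)
    (add_mul_one_sub_exp_le_iterate_transition ho k w) hac.le m 0
  simpa [sub_eq_add_neg] using hiter

section Asymptotics

theorem tendsto_log_div_self : Tendsto (fun x : ℝ => Real.log x / x) atTop (𝓝 0) :=
  Real.isLittleO_log_id_atTop.tendsto_div_nhds_zero

theorem tendsto_div_log_atTop : Tendsto (fun x : ℝ => x / Real.log x) atTop atTop := by
  have hpos : ∀ᶠ x : ℝ in atTop, Real.log x / x ∈ Set.Ioi 0 := by
    filter_upwards [eventually_gt_atTop 1] with x hx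
    exact div_pos (Real.log_pos hx) (zero_lt_one.trans hx)
  refine (tendsto_nhdsWithin_iff.2 ⟨tendsto_log_div_self, hpos⟩).inv_tendsto_nhdsGT_zero.congr
    fun x => ?_
  rw [Pi.inv_apply, inv_div]

theorem tendsto_log_div_log_div_log :
    Tendsto (fun x : ℝ => Real.log (x / Real.log x) / Real.log x) atTop (𝓝 1) := by
  have hlim := (tendsto_log_div_self.comp Real.tendsto_log_atTop).const_sub 1
  rw [sub_zero] at hlim
  refine hlim.congr' ?_
  filter_upwards [eventually_gt_atTop 1] with x hx
  have hlog := Real.log_pos hx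
  rw [Real.log_div (zero_lt_one.trans hx).ne' hlog.ne', sub_div, div_self hlog.ne']
  rfl

/-- With `x = log n`, this is the bound that `expWeight` with base `x / log x` gives for the star on
`n` vertices. -/
theorem tendsto_expWeight_bound : Tendsto (fun x : ℝ => (x + Real.log (x / Real.log x) +
      (x / Real.log x - 1)) / Real.log (x / Real.log x) * Real.log x / x) atTop (𝓝 1) := by
  have hnum : Tendsto (fun x : ℝ => 1 + Real.log (x / Real.log x) / Real.log x *
      (Real.log x / x) + ((Real.log x)⁻¹ - x⁻¹)) atTop (𝓝 (1 + 1 * 0 + (0 - 0))) :=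
    ((tendsto_log_div_log_div_log.mul tendsto_log_div_self).const_add 1).add
      (Real.tendsto_log_atTop.inv_tendsto_atTop.sub tendsto_inv_atTop_zero)
  have hlim := hnum.div tendsto_log_div_log_div_log one_ne_zero
  simp only [mul_zero, add_zero, sub_zero, div_one] at hlim
  refine hlim.congr' ?_
  filter_upwards [eventually_gt_atTop 1] with x hx
  have hlog := Real.log_pos hx
  rw [Pi.div_apply, div_div_eq_mul_div]
  field_simp

variable {s b e : ℝ} {k w : ℕ → ℕ}

theorem pow_div_le_choose_mul_inv_pow {n k w : ℕ} {L : ℝ} (hn : n ≠ 0)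
    (hkL : k ≤ L) (hs : 0 ≤ s) (hkw : s * n + k ≤ w) :
    (s / L) ^ k ≤ w.choose k * (n : ℝ)⁻¹ ^ k := by
  have hkw' : k ≤ w := Nat.cast_le.1 (le_trans (by linarith [mul_nonneg hs n.cast_nonneg]) hkw)
  have hfact : (k.factorial : ℝ) ≤ L ^ k :=
    calc (k.factorial : ℝ) ≤ (k : ℝ) ^ k := by exact_mod_cast Nat.factorial_le_pow k
      _ ≤ L ^ k := by gcongr
  have hbase : s * n ≤ (w + 1 - k : ℕ) := by
    rw [Nat.cast_sub (hkw'.trans w.le_succ)]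
    push_cast
    linarith
  calc (s / L) ^ k = (s * n) ^ k / L ^ k * (n : ℝ)⁻¹ ^ k := by
        rw [← div_pow, ← mul_pow]
        field_simp
    _ ≤ ((w + 1 - k : ℕ) : ℝ) ^ k / k.factorial * (n : ℝ)⁻¹ ^ k := by gcongr
    _ ≤ w.choose k * (n : ℝ)⁻¹ ^ k := by
        gcongr
        exact_mod_cast Nat.pow_le_choose (α := ℝ) k w

theorem tendsto_log_natCast_atTop : Tendsto (fun n : ℕ => Real.log n) atTop atTop :=
  Real.tendsto_log_atTop.comp tendsto_natCast_atTop_atTop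

theorem tendsto_mul_div_log_pow_atTop (hs : 0 < s) (hb : b < 1)
    (hk : Tendsto (fun n : ℕ => k n * Real.log (Real.log n) / Real.log n) atTop (𝓝 b)) :
    Tendsto (fun n : ℕ => n * (s / Real.log n) ^ k n) atTop atTop := by
  have hlog := tendsto_log_natCast_atTop
  have hloglog := Real.tendsto_log_atTop.comp hlog
  have hexponent : Tendsto (fun n : ℕ => 1 - k n * Real.log (Real.log n) / Real.log n *
      (1 - Real.log s / Real.log (Real.log n))) atTop (𝓝 (1 - b * (1 - 0))) :=
    (hk.mul ((hloglog.const_div_atTop (Real.log s)).const_sub 1)).const_sub 1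
  refine (Real.tendsto_exp_atTop.comp
    (hlog.atTop_mul_pos (by linarith) hexponent)).congr' ?_
  filter_upwards [eventually_gt_atTop 0, hlog.eventually_gt_atTop 0, hloglog.eventually_gt_atTop 0]
    with n hn hL hl
  have hl' : Real.log (Real.log n) ≠ 0 := ne_of_gt hl
  have hsplit : Real.log n * (1 - k n * Real.log (Real.log n) / Real.log n *
      (1 - Real.log s / Real.log (Real.log n))) =
        Real.log n + k n * (Real.log s - Real.log (Real.log n)) := by
    field_simp
    ring
  rw [Function.comp_apply, hsplit, Real.exp_add, Real.exp_nat_mul, Real.exp_sub, Real.exp_log hs,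
    Real.exp_log hL, Real.exp_log (Nat.cast_pos.2 hn)]

theorem tendsto_fullVerticesBound (hb : b < 1) (he0 : 0 < e) (he1 : e < 1)
    (hk : Tendsto (fun n : ℕ => k n * Real.log (Real.log n) / Real.log n) atTop (𝓝 b))
    (hw : Tendsto (fun n : ℕ => (w n / n : ℝ)) atTop (𝓝 e)) :
    Tendsto (fun n : ℕ => fullVerticesBound n (k n) (w n)) atTop atTop := by
  have hlog := tendsto_log_natCast_atTop
  have hloglog := Real.tendsto_log_atTop.comp hlog
  have hlogn : Tendsto (fun n : ℕ => Real.log n / n) atTop (𝓝 0) :=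
    tendsto_log_div_self.comp tendsto_natCast_atTop_atTop
  refine tendsto_atTop_mono' _ ?_ ((tendsto_mul_div_log_pow_atTop (half_pos he0) hb
    hk).atTop_mul_const (half_pos (sub_pos.2 he1)))
  filter_upwards [eventually_gt_atTop 0, hlog.eventually_gt_atTop 0, hloglog.eventually_ge_atTop 1,
    hk.eventually_lt_const hb, (hw.sub hlogn).eventually_const_lt (show e / 2 < e - 0 by linarith),
    hw.eventually_lt_const (show e < (1 + e) / 2 by linarith)] with n hn hL hl hkn hwlog hwn
  have hn' : (0 : ℝ) < n := Nat.cast_pos.2 hn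
  have hkL : k n ≤ Real.log n := by
    rw [div_lt_one hL] at hkn
    exact (le_mul_of_one_le_right (k n).cast_nonneg hl).trans hkn.le
  have hkw : e / 2 * n + k n ≤ w n := by
    rw [← sub_div, lt_div_iff₀ hn'] at hwlog
    linarith
  have hbernoulli : (1 - e) / 2 ≤ (1 - (n : ℝ)⁻¹) ^ w n := by
    have hle := one_add_mul_le_pow (a := -(n : ℝ)⁻¹)
      (by linarith [Nat.cast_inv_le_one (α := ℝ) n]) (w n)
    rw [← sub_eq_add_neg, mul_neg, ← div_eq_mul_inv] at hle
    linarith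
  rw [fullVerticesBound, mul_assoc]
  gcongr
  exact pow_div_le_choose_mul_inv_pow hn.ne' hkL (by positivity) hkw

theorem tendsto_window_bound (hb : b < 1) (he0 : 0 < e) (he1 : e < 1)
    (hk : Tendsto (fun n : ℕ => k n * Real.log (Real.log n) / Real.log n) atTop (𝓝 b))
    (hw : Tendsto (fun n : ℕ => (w n / n : ℝ)) atTop (𝓝 e)) :
    Tendsto (fun n : ℕ => k n * (1 - Real.exp (-fullVerticesBound n (k n) (w n))) / (1 + w n / n) *
      Real.log (Real.log n) / Real.log n) atTop (𝓝 (b / (1 + e))) := by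
  have hp : Tendsto (fun n : ℕ => 1 - Real.exp (-fullVerticesBound n (k n) (w n))) atTop
      (𝓝 (1 - 0)) :=
    (Real.tendsto_exp_neg_atTop_nhds_zero.comp
      (tendsto_fullVerticesBound hb he0 he1 hk hw)).const_sub 1
  have hlim := (hk.mul hp).div (hw.const_add 1) (by linarith)
  rw [sub_zero, mul_one] at hlim
  refine hlim.congr fun n => ?_
  rw [Pi.div_apply]
  ring

end Asymptotics

section Star

theorem starGraph_eq (n : ℕ) [NeZero n] : starGraph n = SimpleGraph.starGraph (0 : Fin n) := by
  ext i j
  simp only [starGraph, SimpleGraph.fromRel_adj, SimpleGraph.starGraph_adj, Fin.val_eq_zero_iff]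

theorem isUniversal_starGraph (n : ℕ) [NeZero n] : (starGraph n).IsUniversal 0 :=
  starGraph_eq n ▸ SimpleGraph.isUniversal_starGraph_self

theorem isVertexCover_starGraph (n : ℕ) [NeZero n] : (starGraph n).IsVertexCover {0} := by
  intro i j hij
  rw [starGraph_eq, SimpleGraph.starGraph_adj] at hij
  exact hij.2


theorem IsGrowthRate.starGraph_le {n : ℕ} [NeZero n] {γ l : ℝ} (h : IsGrowthRate (starGraph n) γ)
    (hl : 1 < l) : γ ≤ (Real.log n + Real.log l + (l - 1)) / Real.log l := by
  simpa using h.le_of_isVertexCover_singleton (isVertexCover_starGraph n) hl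

theorem IsGrowthRate.le_starGraph {n : ℕ} [NeZero n] {γ : ℝ} (h : IsGrowthRate (starGraph n) γ)
    (k w : ℕ) : k * (1 - Real.exp (-fullVerticesBound n k w)) / (1 + w / n) ≤ γ := by
  simpa using h.le_of_isUniversal (isUniversal_starGraph n) k w

variable {γ : ℕ → ℝ}

theorem eventually_mul_loglog_div_log_lt (hγ : ∀ᶠ n in atTop, IsGrowthRate (starGraph n) (γ n))
    {a : ℝ} (ha : 1 < a) :
    ∀ᶠ n : ℕ in atTop, γ n * Real.log (Real.log n) / Real.log n < a := by
  have hlog := tendsto_log_natCast_atTop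
  filter_upwards [hγ, eventually_ne_atTop 0, hlog.eventually_gt_atTop 1,
    (tendsto_div_log_atTop.comp hlog).eventually_gt_atTop 1,
    (tendsto_expWeight_bound.comp hlog).eventually_lt_const ha] with n hn hn0 hL hbase hlt
  have : NeZero n := ⟨hn0⟩
  have hloglog := Real.log_pos hL
  refine lt_of_le_of_lt ?_ hlt
  simp only [Function.comp_apply]
  gcongr
  exact hn.starGraph_le hbase

theorem eventually_lt_mul_loglog_div_log (hγ : ∀ᶠ n in atTop, IsGrowthRate (starGraph n) (γ n))
    {a : ℝ} (ha : a < 1) :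
    ∀ᶠ n : ℕ in atTop, a < γ n * Real.log (Real.log n) / Real.log n := by
  have hlog := tendsto_log_natCast_atTop
  have hcont : Tendsto (fun e : ℝ => (1 - e) / (1 + e)) (𝓝[>] 0) (𝓝 ((1 - 0) / (1 + 0))) :=
    (ContinuousAt.tendsto (by fun_prop (disch := norm_num))).mono_left nhdsWithin_le_nhds
  obtain ⟨e, hae, he0, he1⟩ := ((hcont.eventually_const_lt (by norm_num; exact ha)).and
    (Ioo_mem_nhdsGT one_pos)).exists
  have hk : Tendsto (fun n : ℕ => ⌊(1 - e) * (Real.log n / Real.log (Real.log n))⌋₊ *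
      Real.log (Real.log n) / Real.log n) atTop (𝓝 (1 - e)) :=
    ((tendsto_nat_floor_mul_div_atTop (sub_nonneg.2 he1.le)).comp
      (tendsto_div_log_atTop.comp hlog)).congr fun n => div_div_eq_mul_div _ _ _
  have hw : Tendsto (fun n : ℕ => (⌈e * n⌉₊ / n : ℝ)) atTop (𝓝 e) :=
    (tendsto_nat_ceil_mul_div_atTop he0.le).comp tendsto_natCast_atTop_atTop
  filter_upwards [hγ, eventually_ne_atTop 0, hlog.eventually_gt_atTop 1,
    (tendsto_window_bound (sub_lt_self 1 he0) he0 he1 hk hw).eventually_const_lt hae]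
    with n hn hn0 hL hlt
  have : NeZero n := ⟨hn0⟩
  have hloglog := Real.log_pos hL
  refine hlt.trans_le ?_
  gcongr
  exact hn.le_starGraph _ _

end Star

theorem stmt9 (γ : ℕ → ℝ) (hγ : ∀ n, 3 ≤ n → IsGrowthRate (starGraph n) (γ n)) :
    Tendsto (fun n : ℕ => γ n * Real.log (Real.log n) / Real.log n) atTop (𝓝 1) ∧
    Tendsto γ atTop atTop := by
  have hev : ∀ᶠ n in atTop, IsGrowthRate (starGraph n) (γ n) := eventually_atTop.2 ⟨3, hγ⟩
  have hlim : Tendsto (fun n : ℕ => γ n * Real.log (Real.log n) / Real.log n) atTop (𝓝 1) :=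
    tendsto_order.2 ⟨fun _ => eventually_lt_mul_loglog_div_log hev,
      fun _ => eventually_mul_loglog_div_log_lt hev⟩
  refine ⟨hlim, (hlim.pos_mul_atTop one_pos
    (tendsto_div_log_atTop.comp tendsto_log_natCast_atTop)).congr' ?_⟩
  filter_upwards [tendsto_log_natCast_atTop.eventually_gt_atTop 1] with n hn
  have hloglog := Real.log_pos hn
  rw [Function.comp_apply, div_mul_div_cancel₀ (zero_lt_one.trans hn).ne',
    mul_div_cancel_right₀ _ hloglog.ne']
end

section
/- There exist finite connected simple graphs G and H which are not isomorphic but whose growth rates coincide: γ(G) = γ(H). (Proposition 1; e.g. a graph obtained by triplicating the butterfly graph has growth rate 11 = γ(K_11).) -/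
open MeasureTheory Filter Topology
open scoped ENNReal Classical

/-!
A deposition at `v` adds one to the maximal height of every clique containing `v`. For two cliques
with `c` common vertices and `w` further vertices on either side, the pair `(L, R)` of maximal
heights of the cliques is therefore a Markov chain. The Poisson equation for `max L R` has a
bounded solution, a multiple of `r ^ |L - R|` with `c * r = w * (1 - r) ^ 2`, so `max L R` is a sum
of orthogonal increments with an explicit constant drift, up to a bounded error. In a connected
graph the minimum grows as fast as the maximum, since any height spreads to every vertex within
`o(n)` steps. The growth rate is thus `c + 2 * w / (1 + r)`: for `c = 3`, `w = 6`, the butterfly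
with tripled vertices, `r = 1 / 2` and the rate is `11`, and `c = 11`, `w = 0` is the complete graph
on `11` vertices.
-/

section StrongLaw

variable {Ω ι : Type*} [MeasurableSpace Ω] {μ : Measure Ω}

lemma integral_sq_sum_of_orthogonal {ξ : ι → Ω → ℝ} (hξ : ∀ i, MemLp (ξ i) 2 μ)
    (horth : Pairwise fun i j => ∫ ω, ξ i ω * ξ j ω ∂μ = 0) (s : Finset ι) :
    ∫ ω, (∑ i ∈ s, ξ i ω) ^ 2 ∂μ = ∑ i ∈ s, ∫ ω, ξ i ω ^ 2 ∂μ := by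
  have hint (i j : ι) : Integrable (fun ω => ξ i ω * ξ j ω) μ := (hξ i).integrable_mul (hξ j)
  simp only [sq, Finset.sum_mul_sum]
  rw [integral_finsetSum s fun i _ => integrable_finsetSum s fun j _ => hint i j]
  refine Finset.sum_congr rfl fun i hi => ?_
  rw [integral_finsetSum s fun j _ => hint i j]
  exact Finset.sum_eq_single_of_mem i hi fun j _ hji => horth hji.symm

lemma integral_sq_average_le [IsProbabilityMeasure μ] {ξ : ℕ → Ω → ℝ} {C : ℝ}
    (hmeas : ∀ n, AEStronglyMeasurable (ξ n) μ) (hbdd : ∀ n ω, |ξ n ω| ≤ C)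
    (horth : Pairwise fun m n => ∫ ω, ξ m ω * ξ n ω ∂μ = 0) (n : ℕ) :
    ∫ ω, ((∑ i ∈ Finset.range n, ξ i ω) / n) ^ 2 ∂μ ≤ C ^ 2 / n := by
  have hξ (i : ℕ) : MemLp (ξ i) 2 μ :=
    MemLp.of_bound (hmeas i) C (Eventually.of_forall (hbdd i))
  have hvar (i : ℕ) : ∫ ω, ξ i ω ^ 2 ∂μ ≤ C ^ 2 := by
    calc ∫ ω, ξ i ω ^ 2 ∂μ ≤ ∫ _, C ^ 2 ∂μ :=
          integral_mono (hξ i).integrable_sq (integrable_const _) fun ω =>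
            sq_le_sq.2 ((hbdd i ω).trans (le_abs_self C))
      _ = C ^ 2 := by simp
  calc ∫ ω, ((∑ i ∈ Finset.range n, ξ i ω) / n) ^ 2 ∂μ
      = (∑ i ∈ Finset.range n, ∫ ω, ξ i ω ^ 2 ∂μ) / n ^ 2 := by
        simp only [div_pow, integral_div, integral_sq_sum_of_orthogonal hξ horth]
    _ ≤ (n * C ^ 2) / n ^ 2 := by
        gcongr
        simpa using Finset.sum_le_sum fun i (_ : i ∈ Finset.range n) => hvar i
    _ = C ^ 2 / n := by
        rcases eq_or_ne (n : ℝ) 0 with hn | hn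
        · simp [hn]
        · field_simp

lemma ae_tendsto_zero_of_summable_integral {f : ℕ → Ω → ℝ} (hint : ∀ n, Integrable (f n) μ)
    (hsum : Summable fun n => ∫ ω, ‖f n ω‖ ∂μ) :
    ∀ᵐ ω ∂μ, Tendsto (fun n => f n ω) atTop (𝓝 0) := by
  have htsum : ∑' n, eLpNorm (f n) 1 μ ≠ ∞ := by
    simpa only [eLpNorm_one_eq_lintegral_enorm, ← ofReal_integral_norm_eq_lintegral_enorm (hint _)]
      using hsum.tsum_ofReal_ne_top
  filter_upwards [summable_norm_of_tsum_eLpNorm_ne_top le_rfl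
    (fun n => (hint n).aestronglyMeasurable) htsum] with ω hω
  exact tendsto_zero_iff_norm_tendsto_zero.2 hω.tendsto_atTop_zero

lemma eventually_sq_succ_le {a : ℝ} (ha : 1 < a) :
    ∀ᶠ n : ℕ in atTop, (((n + 1) ^ 2 : ℕ) : ℝ) ≤ a * ((n ^ 2 : ℕ) : ℝ) := by
  have hratio : Tendsto (fun n : ℕ => (1 + 1 / n : ℝ) ^ 2) atTop (𝓝 ((1 + 0) ^ 2)) :=
    ((tendsto_const_div_atTop_nhds_zero_nat 1).const_add 1).pow 2
  filter_upwards [hratio.eventually_lt_const (by simpa using ha), eventually_ne_atTop 0]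
    with n hn hn0
  calc (((n + 1) ^ 2 : ℕ) : ℝ) = (1 + 1 / n : ℝ) ^ 2 * ((n ^ 2 : ℕ) : ℝ) := by
        push_cast
        field_simp
    _ ≤ a * ((n ^ 2 : ℕ) : ℝ) := by gcongr

-- Adding `C` to every term makes the partial sums monotone.
lemma tendsto_average_of_tendsto_average_sq {a : ℕ → ℝ} {C : ℝ} (hbdd : ∀ i, |a i| ≤ C)
    (hsq : Tendsto (fun m : ℕ => (∑ i ∈ Finset.range (m ^ 2), a i) / ((m ^ 2 : ℕ) : ℝ)) atTop
      (𝓝 0)) :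
    Tendsto (fun n : ℕ => (∑ i ∈ Finset.range n, a i) / n) atTop (𝓝 0) := by
  have hshift {n : ℕ} (hn : n ≠ 0) : (∑ i ∈ Finset.range n, (a i + C)) / n =
      (∑ i ∈ Finset.range n, a i) / n + C := by
    simp [Finset.sum_add_distrib, add_div, hn]
  have hpow : Tendsto (fun m : ℕ => m ^ 2) atTop atTop := tendsto_pow_atTop two_ne_zero
  have hmono : Monotone fun n => ∑ i ∈ Finset.range n, (a i + C) :=
    monotone_nat_of_le_succ fun n => by
      rw [Finset.sum_range_succ]
      linarith [neg_le_of_abs_le (hbdd n)]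
  have hlim : Tendsto (fun n : ℕ => (∑ i ∈ Finset.range n, (a i + C)) / n) atTop (𝓝 C) := by
    refine tendsto_div_of_monotone_of_exists_subseq_tendsto_div _ C hmono fun b hb =>
      ⟨fun m => m ^ 2, eventually_sq_succ_le hb, hpow, ?_⟩
    refine Tendsto.congr' ?_ (by simpa only [zero_add] using hsq.add_const C)
    filter_upwards [hpow.eventually_gt_atTop 0] with m hm using (hshift hm.ne').symm
  refine Tendsto.congr' ?_ (by simpa using hlim.sub_const C)
  filter_upwards [eventually_ne_atTop 0] with n hn
  rw [hshift hn, add_sub_cancel_right]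

theorem ae_tendsto_average_of_orthogonal [IsProbabilityMeasure μ] {ξ : ℕ → Ω → ℝ} {C : ℝ}
    (hmeas : ∀ n, AEStronglyMeasurable (ξ n) μ) (hbdd : ∀ n ω, |ξ n ω| ≤ C)
    (horth : Pairwise fun m n => ∫ ω, ξ m ω * ξ n ω ∂μ = 0) :
    ∀ᵐ ω ∂μ, Tendsto (fun n : ℕ => (∑ i ∈ Finset.range n, ξ i ω) / n) atTop (𝓝 0) := by
  have hξ (i : ℕ) : MemLp (ξ i) 2 μ :=
    MemLp.of_bound (hmeas i) C (Eventually.of_forall (hbdd i))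
  have hint (n : ℕ) : Integrable (fun ω => ((∑ i ∈ Finset.range n, ξ i ω) / n) ^ 2) μ := by
    simp only [div_pow]
    exact (memLp_finsetSum _ fun i _ => hξ i).integrable_sq.div_const _
  have hsum : Summable fun m : ℕ =>
      ∫ ω, ‖((∑ i ∈ Finset.range (m ^ 2), ξ i ω) / ((m ^ 2 : ℕ) : ℝ)) ^ 2‖ ∂μ := by
    refine Summable.of_nonneg_of_le (fun m => integral_nonneg fun ω => norm_nonneg _)
      (fun m => ?_) ((Real.summable_nat_pow_inv.2 one_lt_two).mul_left (C ^ 2))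
    simp only [norm_pow, Real.norm_eq_abs, sq_abs, ← div_eq_mul_inv]
    exact_mod_cast integral_sq_average_le hmeas hbdd horth (m ^ 2)
  filter_upwards [ae_tendsto_zero_of_summable_integral (fun m => hint (m ^ 2)) hsum] with ω hω
  refine tendsto_average_of_tendsto_average_sq (hbdd · ω) ?_
  rw [tendsto_zero_iff_abs_tendsto_zero]
  simpa only [Function.comp_def, Real.sqrt_sq_eq_abs, Real.sqrt_zero] using hω.sqrt

end StrongLaw

lemma exists_prefix_eq {V : Type*} [Nonempty V] {n : ℕ} (w : Fin n → V) :
    ∃ x : ℕ → V, (fun i : Fin n => x i) = w :=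
  ⟨Function.extend Fin.val w fun _ => Classical.arbitrary V,
    funext (Fin.val_injective.extend_apply w _)⟩

lemma exists_eq_prefix_of_dependsOn {V β : Type*} [Nonempty V] {F : (ℕ → V) → β} {n : ℕ}
    (hF : DependsOn F (Set.Iic n)) :
    ∃ f : (Fin (n + 1) → V) → β, ∀ x, F x = f fun i => x i := by
  choose ext hext using exists_prefix_eq (V := V) (n := n + 1)
  exact ⟨F ∘ ext, fun x => hF fun i hi =>
    (congrFun (hext fun j => x j) ⟨i, Nat.lt_succ_of_le hi⟩).symm⟩

lemma dependsOn_Iio_of_succ {V σ : Type*} {S : ℕ → (ℕ → V) → σ} {s₀ : σ} {step : σ → V → σ}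
    (hS₀ : ∀ x, S 0 x = s₀) (hS : ∀ n x, S (n + 1) x = step (S n x) (x n)) (n : ℕ) :
    DependsOn (S n) (Set.Iio n) := by
  induction n with
  | zero => exact fun x y _ => (hS₀ x).trans (hS₀ y).symm
  | succ n ih =>
    intro x y hxy
    rw [hS, hS, ih fun i hi => hxy i (hi.trans n.lt_succ_self),
      hxy n (Set.mem_Iio.2 n.lt_succ_self)]

namespace IsUniformIID

variable {V Ω : Type*} [Fintype V] [MeasurableSpace Ω] {μ : Measure Ω} {X : ℕ → Ω → V}

protected lemma measurable [MeasurableSpace V] [DiscreteMeasurableSpace V]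
    (hX : IsUniformIID μ X) (n : ℕ) : Measurable (X n) :=
  measurable_to_countable' fun v => hX.1 n v

lemma measurable_prefix [MeasurableSpace V] [DiscreteMeasurableSpace V] (hX : IsUniformIID μ X)
    (n : ℕ) : Measurable fun ω (i : Fin n) => X i ω :=
  measurable_pi_lambda _ fun i => hX.measurable i

variable [Nonempty V]

lemma map_prefix [MeasurableSpace V] [DiscreteMeasurableSpace V] (hX : IsUniformIID μ X) (n : ℕ) :
    μ.map (fun ω (i : Fin n) => X i ω) = ((Fintype.card V : ℝ≥0∞)⁻¹ ^ n) • Measure.count := by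
  refine Measure.ext_of_singleton fun w => ?_
  obtain ⟨x, rfl⟩ := exists_prefix_eq w
  rw [Measure.map_apply (hX.measurable_prefix n) (measurableSet_singleton _),
    Measure.smul_apply, Measure.count_singleton, smul_eq_mul, mul_one, ← hX.2 n x]
  congr 1
  ext ω
  simp [funext_iff, Fin.forall_iff]

lemma measurable_comp (hX : IsUniformIID μ X) {β : Type*} [MeasurableSpace β] {F : (ℕ → V) → β}
    {n : ℕ} (hF : DependsOn F (Set.Iic n)) : Measurable fun ω => F fun k => X k ω := by
  let _ : MeasurableSpace V := ⊤
  obtain ⟨f, hf⟩ := exists_eq_prefix_of_dependsOn hF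
  simp only [hf]
  exact (Measurable.of_discrete (f := f)).comp (hX.measurable_prefix _)

lemma integral_eq_zero (hX : IsUniformIID μ X) {F : (ℕ → V) → ℝ} {n : ℕ}
    (hF : DependsOn F (Set.Iic n)) (hzero : ∀ x, ∑ v, F (Function.update x n v) = 0) :
    ∫ ω, F (fun k => X k ω) ∂μ = 0 := by
  let _ : MeasurableSpace V := ⊤
  obtain ⟨f, hf⟩ := exists_eq_prefix_of_dependsOn hF
  have hupdate (x : ℕ → V) (v : V) :
      F (Function.update x n v) = f (Fin.snoc (fun i : Fin n => x i) v) := by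
    rw [hf]
    congr 1
    ext i
    refine Fin.lastCases ?_ (fun j => ?_) i
    · simp
    · simp [j.is_lt.ne]
  have hsum : ∑ w, f w = 0 := by
    rw [← (Fin.snocEquiv fun _ => V).sum_comp, Fintype.sum_prod_type_right]
    refine Finset.sum_eq_zero fun w _ => ?_
    obtain ⟨x, rfl⟩ := exists_prefix_eq w
    exact (Finset.sum_congr rfl fun v _ => (hupdate x v).symm).trans (hzero x)
  calc ∫ ω, F (fun k => X k ω) ∂μ
      = ∫ w, f w ∂(μ.map fun ω (i : Fin (n + 1)) => X i ω) := by
        simp only [hf]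
        exact (integral_map (hX.measurable_prefix _).aemeasurable
          (Measurable.of_discrete (f := f)).aestronglyMeasurable).symm
    _ = 0 := by rw [hX.map_prefix, integral_smul_measure, integral_count, hsum, smul_zero]

theorem ae_tendsto_average_of_sum_update_eq_zero [IsProbabilityMeasure μ] (hX : IsUniformIID μ X)
    {ξ : ℕ → (ℕ → V) → ℝ} {C : ℝ} (hdep : ∀ n, DependsOn (ξ n) (Set.Iic n))
    (hbdd : ∀ n x, |ξ n x| ≤ C) (hzero : ∀ n x, ∑ v, ξ n (Function.update x n v) = 0) :
    ∀ᵐ ω ∂μ, Tendsto (fun n : ℕ => (∑ i ∈ Finset.range n, ξ i fun k => X k ω) / n)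
      atTop (𝓝 0) := by
  have hlt {m n : ℕ} (hmn : m < n) :
      ∫ ω, ξ m (fun k => X k ω) * ξ n (fun k => X k ω) ∂μ = 0 := by
    have hpast (x : ℕ → V) (v : V) : ξ m (Function.update x n v) = ξ m x :=
      hdep m fun i hi => Function.update_of_ne (hi.trans_lt hmn).ne v x
    refine hX.integral_eq_zero (F := fun x => ξ m x * ξ n x) (n := n) (fun x y hxy => ?_)
      fun x => ?_
    · exact congrArg₂ (· * ·) (hdep m fun i hi => hxy i (hi.trans hmn.le)) (hdep n hxy)
    · simp only [hpast, ← Finset.mul_sum, hzero, mul_zero]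
  refine ae_tendsto_average_of_orthogonal
    (fun n => (hX.measurable_comp (hdep n)).aestronglyMeasurable)
    (fun n ω => hbdd n _) fun m n hmn => ?_
  rcases hmn.lt_or_gt with h | h
  · exact hlt h
  · simpa only [mul_comm] using hlt h

section Recursion

variable [IsProbabilityMeasure μ] {σ : Type*} {S : ℕ → (ℕ → V) → σ} {s₀ : σ} {step : σ → V → σ}

theorem ae_tendsto_div_of_constant_drift (hX : IsUniformIID μ X) (hS₀ : ∀ x, S 0 x = s₀)
    (hS : ∀ n x, S (n + 1) x = step (S n x) (x n)) {f : σ → ℝ} {g C : ℝ}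
    (hf : ∀ s v, |f (step s v) - f s| ≤ C) (hdrift : ∀ s, ∑ v, (f (step s v) - f s - g) = 0) :
    ∀ᵐ ω ∂μ, Tendsto (fun n : ℕ => f (S n fun k => X k ω) / n) atTop (𝓝 g) := by
  have hdep := dependsOn_Iio_of_succ hS₀ hS
  let ξ (n : ℕ) (x : ℕ → V) : ℝ := f (step (S n x) (x n)) - f (S n x) - g
  have hξ : ∀ᵐ ω ∂μ, Tendsto (fun n : ℕ => (∑ i ∈ Finset.range n, ξ i fun k => X k ω) / n)
      atTop (𝓝 0) := by
    refine hX.ae_tendsto_average_of_sum_update_eq_zero (C := C + |g|)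
      (fun n x y hxy => ?_) (fun n x => ?_) fun n x => ?_
    · simp only [ξ, hdep n fun i hi => hxy i (Set.mem_Iio.1 hi).le, hxy n Set.self_mem_Iic]
    · exact (abs_sub _ _).trans (add_le_add_left (hf _ _) _)
    · have hpast (v : V) : S n (Function.update x n v) = S n x :=
        hdep n fun i hi => Function.update_of_ne (ne_of_lt hi) v x
      simpa only [ξ, hpast, Function.update_self] using hdrift (S n x)
  have hsum (x : ℕ → V) (n : ℕ) : ∑ i ∈ Finset.range n, ξ i x = f (S n x) - f s₀ - n * g := by
    simp only [ξ, ← hS, Finset.sum_sub_distrib, Finset.sum_range_sub fun i => f (S i x)]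
    simp [hS₀]
  filter_upwards [hξ] with ω hω
  refine Tendsto.congr' ?_
    (by simpa using (hω.add_const g).add (tendsto_const_div_atTop_nhds_zero_nat (f s₀)))
  filter_upwards [eventually_ne_atTop 0] with n hn
  rw [hsum]
  field_simp
  ring

theorem ae_tendsto_div_of_poisson_eq (hX : IsUniformIID μ X) (hS₀ : ∀ x, S 0 x = s₀)
    (hS : ∀ n x, S (n + 1) x = step (S n x) (x n)) {f φ : σ → ℝ} {g C K : ℝ}
    (hf : ∀ s v, |f (step s v) - f s| ≤ C) (hφ : ∀ s, |φ s| ≤ K)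
    (hpoisson : ∀ s, ∑ v, (f (step s v) + φ (step s v) - (f s + φ s) - g) = 0) :
    ∀ᵐ ω ∂μ, Tendsto (fun n : ℕ => f (S n fun k => X k ω) / n) atTop (𝓝 g) := by
  have hbdd (s : σ) (v : V) : |f (step s v) + φ (step s v) - (f s + φ s)| ≤ C + (K + K) := by
    rw [add_sub_add_comm]
    exact (abs_add_le _ _).trans
      (add_le_add (hf s v) ((abs_sub _ _).trans (add_le_add (hφ _) (hφ s))))
  have hcorr (x : ℕ → V) : Tendsto (fun n : ℕ => φ (S n x) / n) atTop (𝓝 0) :=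
    tendsto_bdd_div_atTop_nhds_zero (Eventually.of_forall fun n => neg_le_of_abs_le (hφ _))
      (Eventually.of_forall fun n => le_of_abs_le (hφ _)) tendsto_natCast_atTop_atTop
  filter_upwards [hX.ae_tendsto_div_of_constant_drift (f := fun s => f s + φ s) hS₀ hS hbdd
    hpoisson] with ω hω
  simpa only [add_div, add_sub_cancel_right, sub_zero] using hω.sub (hcorr fun k => X k ω)

end Recursion

theorem ae_tendsto_count_div [IsProbabilityMeasure μ] (hX : IsUniformIID μ X) (v : V) :
    ∀ᵐ ω ∂μ, Tendsto (fun n : ℕ => (Nat.count (fun k => X k ω = v) n : ℝ) / n) atTop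
      (𝓝 (Fintype.card V : ℝ)⁻¹) := by
  refine hX.ae_tendsto_div_of_constant_drift (S := fun n x => Nat.count (x · = v) n)
    (step := fun s u => s + if u = v then 1 else 0) (f := (↑)) (C := 1)
    (fun _ => Nat.count_zero _) (fun n x => Nat.count_succ _ n) (fun s u => ?_) fun s => ?_
  · split_ifs <;> simp
  · simp [Finset.sum_sub_distrib]

end IsUniformIID

section LinearWindows

lemma tendsto_comp_floor_mul_div {u : ℕ → ℝ} {g a : ℝ}
    (hu : Tendsto (fun n => u n / n) atTop (𝓝 g)) (ha : 0 < a) :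
    Tendsto (fun n : ℕ => u ⌊a * n⌋₊ / n) atTop (𝓝 (g * a)) := by
  have hfloor : Tendsto (fun n : ℕ => ⌊a * n⌋₊) atTop atTop :=
    tendsto_nat_floor_atTop.comp (tendsto_natCast_atTop_atTop.const_mul_atTop ha)
  have hratio : Tendsto (fun n : ℕ => (⌊a * n⌋₊ : ℝ) / n) atTop (𝓝 a) :=
    (tendsto_nat_floor_mul_div_atTop ha.le).comp tendsto_natCast_atTop_atTop
  refine Tendsto.congr' ?_ ((hu.comp hfloor).mul hratio)
  filter_upwards [hfloor.eventually_ne_atTop 0] with n hn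
  exact div_mul_div_cancel₀ (Nat.cast_ne_zero.2 hn)

lemma eventually_exists_mem_Ico_floor {p : ℕ → Prop} [DecidablePred p] {q a b : ℝ} (hq : 0 < q)
    (hp : Tendsto (fun n : ℕ => (Nat.count p n : ℝ) / n) atTop (𝓝 q)) (ha : 0 < a) (hab : a < b) :
    ∀ᶠ n : ℕ in atTop, ∃ t ∈ Set.Ico ⌊a * n⌋₊ ⌊b * n⌋₊, p t := by
  filter_upwards [(tendsto_comp_floor_mul_div hp ha).eventually_lt
    (tendsto_comp_floor_mul_div hp (ha.trans hab)) (mul_lt_mul_of_pos_left hab hq)] with n hn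
  exact Nat.exists_of_count_lt_count <| Nat.cast_lt.1 <|
    lt_imp_lt_of_le_imp_le (div_le_div_of_nonneg_right · n.cast_nonneg) hn

/-- The sequence `X` takes every value at least once in the time window `[an, bn)` for all large
`n`, whatever `0 < a < b`. This is all the ergodicity needed to compare heights at distinct
vertices. -/
def HitsLinearWindows {V : Type*} (X : ℕ → V) : Prop :=
  ∀ v ⦃a b : ℝ⦄, 0 < a → a < b → ∀ᶠ n : ℕ in atTop, ∃ t ∈ Set.Ico ⌊a * n⌋₊ ⌊b * n⌋₊, X t = v

lemma IsUniformIID.ae_hitsLinearWindows {V Ω : Type*} [Fintype V] [Nonempty V]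
    [MeasurableSpace Ω] {μ : Measure Ω} [IsProbabilityMeasure μ] {X : ℕ → Ω → V}
    (hX : IsUniformIID μ X) : ∀ᵐ ω ∂μ, HitsLinearWindows fun k => X k ω := by
  filter_upwards [ae_all_iff.2 hX.ae_tendsto_count_div] with ω hω v a b ha hab
  exact eventually_exists_mem_Ico_floor (by simp [Fintype.card_pos]) (hω v) ha hab

end LinearWindows

section HeightProcess

variable {V : Type*} [Fintype V] {G : SimpleGraph V} {h₀ : V → ℕ} {X : ℕ → V}

/-- The closed neighbourhood `[x]` of a vertex `x`. -/
noncomputable def closedNeighborFinset (G : SimpleGraph V) (x : V) : Finset V :=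
  {y | y = x ∨ G.Adj x y}

lemma mem_closedNeighborFinset {x y : V} : y ∈ closedNeighborFinset G x ↔ y = x ∨ G.Adj x y := by
  simp [closedNeighborFinset]

lemma heightProcess_succ_of_ne {n : ℕ} {x : V} (hx : x ≠ X n) :
    heightProcess G h₀ X (n + 1) x = heightProcess G h₀ X n x := by
  simp only [heightProcess, if_neg hx]

lemma heightProcess_succ_self (n : ℕ) :
    heightProcess G h₀ X (n + 1) (X n) =
      (closedNeighborFinset G (X n)).sup (heightProcess G h₀ X n) + 1 := by
  simp [heightProcess, closedNeighborFinset, Finset.sup_ite, add_comm]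

lemma heightProcess_lt_succ {n : ℕ} {y : V} (hy : y ∈ closedNeighborFinset G (X n)) :
    heightProcess G h₀ X n y < heightProcess G h₀ X (n + 1) (X n) := by
  rw [heightProcess_succ_self, Nat.lt_add_one_iff]
  exact Finset.le_sup hy

lemma monotone_heightProcess (x : V) : Monotone fun n => heightProcess G h₀ X n x := by
  refine monotone_nat_of_le_succ fun n => ?_
  rcases eq_or_ne x (X n) with rfl | hx
  · exact (heightProcess_lt_succ (mem_closedNeighborFinset.2 (Or.inl rfl))).le
  · exact (heightProcess_succ_of_ne hx).ge

lemma sup_heightProcess_succ_of_isClique {s : Finset V} (hs : G.IsClique s) (n : ℕ) :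
    s.sup (heightProcess G h₀ X (n + 1)) =
      if X n ∈ s then (closedNeighborFinset G (X n)).sup (heightProcess G h₀ X n) + 1
      else s.sup (heightProcess G h₀ X n) := by
  split_ifs with hn
  · rw [← heightProcess_succ_self]
    refine le_antisymm (Finset.sup_le fun x hx => ?_) (Finset.le_sup hn)
    rcases eq_or_ne x (X n) with rfl | hne
    · exact le_rfl
    · exact (heightProcess_succ_of_ne hne).trans_le <| le_of_lt <| heightProcess_lt_succ <|
        mem_closedNeighborFinset.2 <| Or.inr <| hs hn hx hne.symm
  · exact Finset.sup_congr rfl fun _ hx => heightProcess_succ_of_ne (ne_of_mem_of_not_mem hx hn)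

lemma iSup_natCast_eq_sup [Nonempty V] (h : V → ℕ) :
    ⨆ x, (h x : ℝ) = (Finset.univ.sup h : ℕ) := by
  obtain ⟨y, -, hy⟩ := Finset.exists_mem_eq_sup Finset.univ Finset.univ_nonempty h
  refine le_antisymm (ciSup_le fun x => Nat.cast_le.2 (Finset.le_sup (Finset.mem_univ x))) ?_
  rw [hy]
  exact le_ciSup (f := fun x => (h x : ℝ)) (Set.finite_range _).bddAbove y

namespace HitsLinearWindows

lemma eventually_heightProcess_floor_le (hX : HitsLinearWindows X) (hG : G.Connected) (y z : V)
    {a b : ℝ} (ha : 0 < a) (hab : a < b) :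
    ∀ᶠ n : ℕ in atTop, heightProcess G h₀ X ⌊a * n⌋₊ y ≤ heightProcess G h₀ X ⌊b * n⌋₊ z := by
  induction SimpleGraph.reachable_iff_reflTransGen .. |>.1 (hG.preconnected y z)
    generalizing b with
  | refl =>
    exact Eventually.of_forall fun n => monotone_heightProcess y (by gcongr)
  | @tail u z _ hadj ih =>
    obtain ⟨c, hac, hcb⟩ := exists_between hab
    filter_upwards [ih hac, hX z (ha.trans hac) hcb] with n hu ⟨t, ht, htz⟩
    subst htz
    calc heightProcess G h₀ X ⌊a * n⌋₊ y
        ≤ heightProcess G h₀ X ⌊c * n⌋₊ u := hu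
      _ ≤ heightProcess G h₀ X t u := monotone_heightProcess u ht.1
      _ ≤ heightProcess G h₀ X (t + 1) (X t) :=
          (heightProcess_lt_succ (mem_closedNeighborFinset.2 (Or.inr hadj.symm))).le
      _ ≤ heightProcess G h₀ X ⌊b * n⌋₊ (X t) := monotone_heightProcess _ ht.2

theorem tendsto_iInf_heightProcess_div (hX : HitsLinearWindows X) (hG : G.Connected) {g : ℝ}
    (hsup : Tendsto (fun n : ℕ => (⨆ x, (heightProcess G h₀ X n x : ℝ)) / n) atTop (𝓝 g)) :
    Tendsto (fun n : ℕ => (⨅ x, (heightProcess G h₀ X n x : ℝ)) / n) atTop (𝓝 g) := by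
  have := hG.nonempty
  refine tendsto_order.2 ⟨fun y hy => ?_, fun y hy => ?_⟩
  · obtain ⟨a, ha, hya⟩ : ∃ a ∈ Set.Ioo (0 : ℝ) 1, y < g * a := by
      have hcont : Tendsto (fun a : ℝ => g * a) (𝓝[<] 1) (𝓝 g) := by
        simpa using ((continuous_const_mul g).tendsto 1).mono_left nhdsWithin_le_nhds
      exact ((eventually_mem_set.2 (Ioo_mem_nhdsLT one_pos)).and
        (hcont.eventually_const_lt hy)).exists
    filter_upwards [(tendsto_comp_floor_mul_div hsup ha.1).eventually_const_lt hya,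
      eventually_all.2 fun p : V × V =>
        hX.eventually_heightProcess_floor_le (h₀ := h₀) hG p.1 p.2 ha.1 ha.2] with n hn hle
    refine hn.trans_le ?_
    gcongr
    refine ciSup_le fun u => le_ciInf fun v => ?_
    simpa using hle (u, v)
  · filter_upwards [hsup.eventually_lt_const hy] with n hn
    refine lt_of_le_of_lt ?_ hn
    gcongr
    exact ciInf_le_ciSup (Set.finite_range _).bddBelow (Set.finite_range _).bddAbove

end HitsLinearWindows

theorem isGrowthRate_of_ae_tendsto_sup (hG : G.Connected) {g : ℝ} (hg : 0 < g)
    (hsup : ∀ {Ω : Type} [MeasurableSpace Ω] (μ : Measure Ω) [IsProbabilityMeasure μ]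
      (X : ℕ → Ω → V), IsUniformIID μ X → ∀ᵐ ω ∂μ, Tendsto (fun n : ℕ =>
        ((Finset.univ.sup (heightProcess G (fun _ => 0) (fun k => X k ω) n) : ℕ) : ℝ) / n)
          atTop (𝓝 g)) :
    IsGrowthRate G (Fintype.card V * g) := by
  have := hG.nonempty
  refine ⟨by positivity, fun μ _ X hX => ?_⟩
  have hmax := hsup μ X hX
  simp only [← iSup_natCast_eq_sup] at hmax
  simp only [mul_div_assoc]
  constructor
  · filter_upwards [hmax] with ω hω using hω.const_mul _
  · filter_upwards [hmax, hX.ae_hitsLinearWindows] with ω hω hwin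
    exact (hwin.tendsto_iInf_heightProcess_div hG hω).const_mul _

end HeightProcess

section Corrector

/-- The corrector `φ` of the pair `(L, R)` of maximal heights of two overlapping cliques: a bounded
multiple of `r ^ |L - R|` for which `max L R + φ (L, R)` has constant drift. With `c` common
vertices and `w` further ones on either side, `c * r = w * (1 - r) ^ 2` cancels the dependence on
`|L - R| > 0`, and the factor `r / (1 - r ^ 2)` gives `L = R` the same drift. -/
noncomputable def gapCorrector (r : ℝ) (p : ℕ × ℕ) : ℝ :=
  r / (1 - r ^ 2) * r ^ Nat.dist p.1 p.2

lemma gapCorrector_swap (r : ℝ) (p : ℕ × ℕ) : gapCorrector r p.swap = gapCorrector r p := by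
  simp only [gapCorrector, Prod.fst_swap, Prod.snd_swap, Nat.dist_comm]

lemma gapCorrector_add_left (r : ℝ) (a k : ℕ) :
    gapCorrector r (a + k, a) = r / (1 - r ^ 2) * r ^ k := by
  simp [gapCorrector, Nat.dist]

lemma abs_gapCorrector_le {r : ℝ} (hr₀ : 0 ≤ r) (hr₁ : r < 1) (p : ℕ × ℕ) :
    |gapCorrector r p| ≤ r / (1 - r ^ 2) := by
  have hcoef : 0 ≤ r / (1 - r ^ 2) := div_nonneg hr₀ (by nlinarith)
  rw [gapCorrector, abs_of_nonneg (by positivity)]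
  exact mul_le_of_le_one_right hcoef (pow_le_one₀ hr₀ hr₁.le)

/-- The sum `max L R + φ (L, R)` whose drift is constant, for `p = (L, R)`. -/
noncomputable def correctedMax (r : ℝ) (p : ℕ × ℕ) : ℝ :=
  (max p.1 p.2 : ℕ) + gapCorrector r p

lemma correctedMax_swap (r : ℝ) (p : ℕ × ℕ) : correctedMax r p.swap = correctedMax r p := by
  simp only [correctedMax, gapCorrector_swap, Prod.fst_swap, Prod.snd_swap, max_comm]

lemma correctedMax_add_left (r : ℝ) (a k : ℕ) :
    correctedMax r (a + k, a) = a + k + r / (1 - r ^ 2) * r ^ k := by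
  simp [correctedMax, gapCorrector_add_left]

lemma correctedMax_add_right (r : ℝ) (a k : ℕ) :
    correctedMax r (a, a + k) = a + k + r / (1 - r ^ 2) * r ^ k :=
  (correctedMax_swap r (a + k, a)).trans (correctedMax_add_left r a k)

lemma correctedMax_self (r : ℝ) (a : ℕ) : correctedMax r (a, a) = a + r / (1 - r ^ 2) := by
  simpa using correctedMax_add_left r a 0

lemma correctedMax_poisson_eq {r c w : ℝ} (hr₀ : 0 ≤ r) (hr₁ : r < 1)
    (hr : c * r = w * (1 - r) ^ 2) (a b : ℕ) :
    c * (correctedMax r (max a b + 1, max a b + 1) - correctedMax r (a, b)) +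
      w * (correctedMax r (a + 1, b) - correctedMax r (a, b)) +
      w * (correctedMax r (a, b + 1) - correctedMax r (a, b)) = c + 2 * w / (1 + r) := by
  wlog hba : b ≤ a generalizing a b with H
  · rw [← H b a (le_of_not_ge hba), max_comm b a, ← correctedMax_swap r (a, b),
      ← correctedMax_swap r (a, b + 1), ← correctedMax_swap r (a + 1, b)]
    exact add_right_comm _ _ _
  have hr₂ : 1 - r ^ 2 ≠ 0 := by nlinarith
  have hγ : 2 * w / (1 + r) = 2 * w - 2 * w * (r / (1 - r ^ 2)) * (1 - r) := by
    have hr₃ : 1 + r ≠ 0 := by positivity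
    field_simp
    ring
  have hc : r / (1 - r ^ 2) * (c + 2 * w * (1 - r)) = w := by
    field_simp
    linear_combination hr
  obtain ⟨k, rfl⟩ := Nat.exists_eq_add_of_le hba
  have hleft : correctedMax r (b + k + 1, b) = _ := correctedMax_add_left r b (k + 1)
  rw [max_eq_left hba, hγ, correctedMax_self, correctedMax_add_left, hleft]
  rcases k with _ | k
  · rw [add_zero, correctedMax_add_right r b 1]
    push_cast
    ring
  · rw [← add_assoc, add_right_comm b k 1, correctedMax_add_left]
    push_cast
    linear_combination hc - r / (1 - r ^ 2) * r ^ k * hr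

end Corrector

section TwoCliques

variable {V : Type*} {A B : Finset V}

/-- Two cliques, on the vertex sets `A` and `B`, glued along their intersection. Blowing up every
vertex of a butterfly graph to a clique gives a graph of this form. -/
def twoCliques (A B : Finset V) : SimpleGraph V where
  Adj x y := x ≠ y ∧ (x ∈ A ∧ y ∈ A ∨ x ∈ B ∧ y ∈ B)
  symm := ⟨fun x y h => by tauto⟩
  loopless := ⟨fun x h => h.1 rfl⟩

lemma twoCliques_isClique_left : (twoCliques A B).IsClique A :=
  fun _ hx _ hy hxy => ⟨hxy, Or.inl ⟨hx, hy⟩⟩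

lemma twoCliques_isClique_right : (twoCliques A B).IsClique B :=
  fun _ hx _ hy hxy => ⟨hxy, Or.inr ⟨hx, hy⟩⟩

lemma twoCliques_univ [Fintype V] : twoCliques (Finset.univ : Finset V) Finset.univ = ⊤ := by
  ext
  simp [twoCliques]

variable [DecidableEq V]

/-- The effect of a deposition at `v` on the pair of maximal heights over `A` and over `B`. -/
def twoCliquesStep (A B : Finset V) (p : ℕ × ℕ) (v : V) : ℕ × ℕ :=
  if v ∈ A then
    if v ∈ B then (max p.1 p.2 + 1, max p.1 p.2 + 1) else (p.1 + 1, p.2)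
  else if v ∈ B then (p.1, p.2 + 1) else p

lemma abs_max_twoCliquesStep_sub_le (p : ℕ × ℕ) (v : V) :
    |((max (twoCliquesStep A B p v).1 (twoCliquesStep A B p v).2 : ℕ) : ℝ) -
      (max p.1 p.2 : ℕ)| ≤ 1 := by
  have hle : max p.1 p.2 ≤ max (twoCliquesStep A B p v).1 (twoCliquesStep A B p v).2 ∧
      max (twoCliquesStep A B p v).1 (twoCliquesStep A B p v).2 ≤ max p.1 p.2 + 1 := by
    unfold twoCliquesStep
    split_ifs <;> omega
  rw [abs_sub_le_iff, sub_le_iff_le_add', sub_le_iff_le_add']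
  exact ⟨by exact_mod_cast hle.2, by exact_mod_cast hle.1.trans (Nat.le_add_right _ _)⟩

variable [Fintype V]

lemma twoCliques_connected (hAB : A ∪ B = Finset.univ) (hne : (A ∩ B).Nonempty) :
    (twoCliques A B).Connected := by
  obtain ⟨c, hc⟩ := hne
  have hreach (v : V) : (twoCliques A B).Reachable c v := by
    rcases eq_or_ne c v with rfl | hcv
    · rfl
    · have hv := hAB.ge (Finset.mem_univ v)
      rw [Finset.mem_inter] at hc
      rw [Finset.mem_union] at hv
      exact SimpleGraph.Adj.reachable ⟨hcv, by tauto⟩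
  have : Nonempty V := ⟨c⟩
  exact ⟨fun u v => (hreach u).symm.trans (hreach v)⟩

lemma closedNeighborFinset_twoCliques {v : V} (hv : v ∈ A ∪ B) :
    closedNeighborFinset (twoCliques A B) v =
      (if v ∈ A then A else ∅) ∪ (if v ∈ B then B else ∅) := by
  ext y
  rw [Finset.mem_union] at hv
  rw [mem_closedNeighborFinset, Finset.mem_union, twoCliques]
  rcases eq_or_ne y v with rfl | hy
  · split_ifs <;> simp_all
  · split_ifs <;> simp_all [hy.symm]

lemma sup_heightProcess_twoCliques_succ (h₀ : V → ℕ) (X : ℕ → V) (n : ℕ) :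
    (A.sup (heightProcess (twoCliques A B) h₀ X (n + 1)),
        B.sup (heightProcess (twoCliques A B) h₀ X (n + 1))) =
      twoCliquesStep A B (A.sup (heightProcess (twoCliques A B) h₀ X n),
        B.sup (heightProcess (twoCliques A B) h₀ X n)) (X n) := by
  rw [sup_heightProcess_succ_of_isClique twoCliques_isClique_left,
    sup_heightProcess_succ_of_isClique twoCliques_isClique_right]
  by_cases hA : X n ∈ A <;> by_cases hB : X n ∈ B <;>
    simp [hA, hB, closedNeighborFinset_twoCliques, twoCliquesStep, Finset.sup_union]

lemma sum_twoCliquesStep (hAB : A ∪ B = Finset.univ) (F : ℕ × ℕ → ℝ) (a b : ℕ) :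
    ∑ v, F (twoCliquesStep A B (a, b) v) =
      (A ∩ B).card * F (max a b + 1, max a b + 1) + (A \ B).card * F (a + 1, b) +
        (B \ A).card * F (a, b + 1) := by
  have hconst {s : Finset V} {q : ℕ × ℕ} (hs : ∀ v ∈ s, twoCliquesStep A B (a, b) v = q) :
      ∑ v ∈ s, F (twoCliquesStep A B (a, b) v) = s.card * F q := by
    rw [Finset.sum_congr rfl fun v hv => congrArg F (hs v hv), Finset.sum_const, nsmul_eq_mul]
  rw [← hAB, ← Finset.union_sdiff_self_eq_union, Finset.sum_union Finset.disjoint_sdiff,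
    ← Finset.sum_inter_add_sum_sdiff A B]
  congrm ?_ + ?_ + ?_ <;> refine hconst fun v hv => ?_ <;> simp_all [twoCliquesStep]

lemma sum_correctedMax_twoCliquesStep_sub [Nonempty V] (hAB : A ∪ B = Finset.univ)
    (hcard : (A \ B).card = (B \ A).card) {r : ℝ} (hr₀ : 0 ≤ r) (hr₁ : r < 1)
    (hr : (A ∩ B).card * r = (A \ B).card * (1 - r) ^ 2) (p : ℕ × ℕ) :
    ∑ v, (correctedMax r (twoCliquesStep A B p v) - correctedMax r p -
      ((A ∩ B).card + 2 * (A \ B).card / (1 + r)) / Fintype.card V) = 0 := by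
  obtain ⟨a, b⟩ := p
  set γ : ℝ := (A ∩ B).card + 2 * (A \ B).card / (1 + r)
  have hsize : (Fintype.card V : ℝ) = (A ∩ B).card + (A \ B).card + (A \ B).card := by
    simpa [hcard] using sum_twoCliquesStep hAB (fun _ => 1) 0 0
  have hγ : Fintype.card V * (γ / Fintype.card V) = γ := mul_div_cancel₀ γ (by simp)
  rw [hsize] at hγ ⊢
  rw [sum_twoCliquesStep hAB fun q => correctedMax r q - correctedMax r (a, b) - γ / _, ← hcard]
  linear_combination correctedMax_poisson_eq hr₀ hr₁ hr a b - hγ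

theorem isGrowthRate_twoCliques (hAB : A ∪ B = Finset.univ) (hne : (A ∩ B).Nonempty)
    (hcard : (A \ B).card = (B \ A).card) {r : ℝ} (hr₀ : 0 ≤ r) (hr₁ : r < 1)
    (hr : (A ∩ B).card * r = (A \ B).card * (1 - r) ^ 2) :
    IsGrowthRate (twoCliques A B) ((A ∩ B).card + 2 * (A \ B).card / (1 + r)) := by
  have : Nonempty V := hne.to_type
  have hc : (0 : ℝ) < (A ∩ B).card := by exact_mod_cast hne.card_pos
  rw [← mul_div_cancel₀ (_ + _) (show (Fintype.card V : ℝ) ≠ 0 by simp)]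
  refine isGrowthRate_of_ae_tendsto_sup (twoCliques_connected hAB hne) (by positivity)
    fun μ _ X hX => ?_
  simp only [← hAB, Finset.sup_union]
  exact hX.ae_tendsto_div_of_poisson_eq (f := fun p : ℕ × ℕ => ((max p.1 p.2 : ℕ) : ℝ))
    (S := fun n x => (A.sup (heightProcess (twoCliques A B) (fun _ => 0) x n),
      B.sup (heightProcess (twoCliques A B) (fun _ => 0) x n)))
    (s₀ := (A.sup fun _ => 0, B.sup fun _ => 0)) (fun _ => rfl)
    (fun n x => sup_heightProcess_twoCliques_succ _ x n)
    abs_max_twoCliquesStep_sub_le (abs_gapCorrector_le hr₀ hr₁)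
    (sum_correctedMax_twoCliquesStep_sub hAB hcard hr₀ hr₁ hr)

end TwoCliques

lemma isGrowthRate_top {V : Type*} [Fintype V] [Nonempty V] :
    IsGrowthRate (⊤ : SimpleGraph V) (Fintype.card V) := by
  simpa [twoCliques_univ] using isGrowthRate_twoCliques (A := Finset.univ)
    (B := (Finset.univ : Finset V)) (by simp) (by simp) (by simp) (r := 0) le_rfl one_pos (by simp)

theorem stmt11 :
    ∃ (p q : ℕ) (G : SimpleGraph (Fin p)) (H : SimpleGraph (Fin q)) (γ : ℝ),
      G.Connected ∧ H.Connected ∧ IsGrowthRate G γ ∧ IsGrowthRate H γ ∧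
      IsEmpty (G ≃g H) := by
  let A : Finset (Fin 15) := {v | v < 9}
  let B : Finset (Fin 15) := {v | 6 ≤ v}
  have hAB : A ∪ B = Finset.univ := by decide
  have hcenter : (A ∩ B).card = 3 := by decide
  have hleft : (A \ B).card = 6 := by decide
  have hright : (B \ A).card = 6 := by decide
  have hne : (A ∩ B).Nonempty := Finset.card_pos.1 (by omega)
  have hbutterfly : IsGrowthRate (twoCliques A B) 11 := by
    convert isGrowthRate_twoCliques hAB hne (hleft.trans hright.symm) (r := 1 / 2) (by norm_num)
      (by norm_num) (by norm_num [hcenter, hleft]) using 1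
    norm_num [hcenter, hleft]
  exact ⟨15, 11, twoCliques A B, ⊤, 11, twoCliques_connected hAB hne, SimpleGraph.connected_top,
    hbutterfly, by simpa using isGrowthRate_top (V := Fin 11),
    ⟨fun e => by simpa using Fintype.card_congr e.toEquiv⟩⟩
end
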